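/- arXiv:1505.02829 — 4 statements merged into one kernel-verified Lean document; each statement's English description precedes it below -/
import Mathlib

section
/- Every two-connected cyclically orientable finite simple graph with at least 3 vertices has a vertex of degree 2. -/
/-!
Why the theorem holds. Cyclic orientability is only used at single vertices: if `a ≠ c` are
neighbours of `b` and a connected vertex set avoiding `b` contains `a`, `c` and no further neighbour
of `b`, then a shortest path from `a` to `c` in that set closes up to a chordless cycle, so exactly
one of `ab`, `bc` points away from `b` (`dir_iff_dir`). Hence no vertex has three neighbours any two
of which are joined in this way.

Consequently, a connected set `K` disjoint from an induced cycle `C` is attached to `C` only at the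
ends of one edge (`attachments_subset_edge`). Otherwise, shrink `K` to a minimal connected set with
the same attachments; some attachment `b` then has a single neighbour `q` in it
(`exists_unique_neighbour`). Let `c`, `d` be the neighbours of `b` on `C`. There is an attachment
outside `{b, d}` and one outside `{b, c}`, so `q`, `c`, `d` are pairwise joined as above around `b`,
a contradiction.

Now let `ab` be an edge and `K` a component of `G - {a, b}`. By two-connectedness, an induced cycle
`C` runs through `ab` and otherwise inside `K`. If `C` covers `K`, each vertex of `C` in `K` has
degree two. If not, a component of `G - C` inside `K` is attached to one edge of `C`, and induction
on the size of `K` applies (`exists_degree_two_mem`).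
-/

open SimpleGraph

variable {V : Type*}

/-- An orientation of a simple graph `G`: a directed relation choosing, for each
edge of `G`, exactly one of its two possible directions. -/
structure SimpleGraph.Orientation (G : SimpleGraph V) : Type _ where
  dir : V → V → Prop
  dir_adj : ∀ u v, dir u v → G.Adj u v
  adj_iff_dir : ∀ u v, G.Adj u v → (dir u v ↔ ¬ dir v u)

/-- A closed walk is a chordless cycle if it is a cycle and the only edges of `G`
between vertices of the cycle are the edges of the cycle itself (i.e. it is an
induced cycle). -/
def SimpleGraph.Walk.IsChordlessCycle {G : SimpleGraph V} {v : V} (c : G.Walk v v) : Prop :=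
  c.IsCycle ∧ ∀ u w : V, u ∈ c.support → w ∈ c.support → G.Adj u w → s(u, w) ∈ c.edges

/-- A cycle (closed walk) is cyclically oriented by an orientation `o` if all of
its darts point the same way around the cycle. -/
def SimpleGraph.Orientation.IsCyclicOn {G : SimpleGraph V} (o : G.Orientation) {v : V}
    (c : G.Walk v v) : Prop :=
  (∀ d ∈ c.darts, o.dir d.toProd.1 d.toProd.2) ∨ (∀ d ∈ c.darts, o.dir d.toProd.2 d.toProd.1)

/-- A graph is cyclically orientable if it admits an orientation in which every
chordless cycle is cyclically oriented. -/
def SimpleGraph.CyclicallyOrientable (G : SimpleGraph V) : Prop :=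
  ∃ o : G.Orientation, ∀ (v : V) (c : G.Walk v v), c.IsChordlessCycle → o.IsCyclicOn c

/-- A subgraph has no cut vertex if it is connected and remains connected after
the deletion of any single one of its vertices. -/
def SimpleGraph.Subgraph.HasNoCutVertex {G : SimpleGraph V} (H : G.Subgraph) : Prop :=
  H.coe.Connected ∧ ∀ v ∈ H.verts, (H.deleteVerts {v}).coe.Connected

/-- A block (two-connected component) of `G`: a maximal subgraph of `G` that has
no cut vertex. -/
def SimpleGraph.Subgraph.IsBlock {G : SimpleGraph V} (H : G.Subgraph) : Prop :=
  H.HasNoCutVertex ∧ ∀ H' : G.Subgraph, H ≤ H' → H'.HasNoCutVertex → H' = H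

/-- A graph is two-connected if it is connected and the removal of any single
vertex leaves it connected (at least two vertices must be removed to
disconnect it). -/
def SimpleGraph.IsTwoConnected (G : SimpleGraph V) : Prop :=
  G.Connected ∧ ∀ v : V, (G.induce {w : V | w ≠ v}).Connected

/-- A graph consists of a single cycle: some cycle passes through all its
vertices and uses all its edges. (A cycle has at least 3 vertices.) -/
def SimpleGraph.IsCycleGraph (G : SimpleGraph V) : Prop :=
  ∃ (v : V) (c : G.Walk v v), c.IsCycle ∧ (∀ w : V, w ∈ c.support) ∧
    ∀ e ∈ G.edgeSet, e ∈ c.edges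

/-- Two subgraphs meet along the single edge `(x, y)`: their intersection
consists exactly of the vertices `x, y` and the edge between them. -/
def SimpleGraph.Subgraph.MeetAlongSingleEdge {G : SimpleGraph V} (G' C : G.Subgraph)
    (x y : V) : Prop :=
  x ≠ y ∧ (G' ⊓ C).verts = {x, y} ∧ (G' ⊓ C).edgeSet = {s(x, y)}

namespace CyclicOrientation

variable {G : SimpleGraph V}

/-! ### Induced paths and induced cycles -/

/-- A shortest path inside a connected vertex set `S` is an induced path of `G`. -/
lemma exists_induced_path {S : Set V} (hS : (G.induce S).Preconnected) {a c : V}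
    (ha : a ∈ S) (hc : c ∈ S) :
    ∃ p : G.Walk a c, p.IsPath ∧ (∀ x ∈ p.support, x ∈ S) ∧
      ∀ u w, u ∈ p.support → w ∈ p.support → G.Adj u w → s(u, w) ∈ p.edges := by
  classical
  have hex : ∃ n : ℕ, ∃ p : G.Walk a c, (∀ x ∈ p.support, x ∈ S) ∧ p.length = n := by
    have lift : ∀ (x y : S) (_ : (G.induce S).Walk x y),
        ∃ p : G.Walk (x : V) (y : V), ∀ z ∈ p.support, z ∈ S := by
      intro x y q
      induction q with
      | nil => exact ⟨Walk.nil, by simp⟩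
      | @cons x y z h q ih =>
        obtain ⟨p, hp⟩ := ih
        refine ⟨Walk.cons h p, fun u hu => ?_⟩
        rcases List.mem_cons.mp hu with rfl | hu
        · exact x.2
        · exact hp u hu
    obtain ⟨q⟩ := hS ⟨a, ha⟩ ⟨c, hc⟩
    obtain ⟨p, hp⟩ := lift _ _ q
    exact ⟨_, p, hp, rfl⟩
  obtain ⟨p₀, hp₀, hlen₀⟩ := Nat.find_spec hex
  have hmin : ∀ q : G.Walk a c, (∀ x ∈ q.support, x ∈ S) → Nat.find hex ≤ q.length :=
    fun q hq => Nat.find_min' hex ⟨q, hq, rfl⟩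
  have hsub : ∀ x ∈ p₀.bypass.support, x ∈ S :=
    fun x hx => hp₀ x (p₀.support_bypass_subset_support hx)
  have hlen : p₀.bypass.length = Nat.find hex :=
    le_antisymm (hlen₀ ▸ p₀.length_bypass_le_length) (hmin _ hsub)
  have hpath := p₀.bypass_isPath
  generalize p₀.bypass = p at hsub hlen hpath
  -- Replacing the segment between positions `i < j` by an edge cannot shorten `p`, so `j = i + 1`.
  have key : ∀ i j : ℕ, i < j → j ≤ p.length → G.Adj (p.getVert i) (p.getVert j) →
      s(p.getVert i, p.getVert j) ∈ p.edges := by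
    intro i j hij hj hadj
    have h := hmin ((p.take i).append (Walk.cons hadj (p.drop j))) (by
      intro x hx
      rw [Walk.mem_support_append_iff, Walk.support_cons, List.mem_cons] at hx
      rcases hx with hx | rfl | hx
      · rw [Walk.support_take] at hx
        exact hsub x (List.mem_of_mem_take hx)
      · exact hsub _ (p.getVert_mem_support i)
      · rw [Walk.drop_support_eq_support_drop_min] at hx
        exact hsub x (List.mem_of_mem_drop hx))
    rw [Walk.length_append, Walk.length_cons, Walk.take_length, Walk.drop_length] at h
    obtain rfl : j = i + 1 := by omega
    exact p.mem_edges_toSubgraph.mp (p.toSubgraph_adj_getVert (by omega))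
  refine ⟨p, hpath, hsub, fun u w hu hw hadj => ?_⟩
  obtain ⟨i, rfl, hi⟩ := Walk.mem_support_iff_exists_getVert.mp hu
  obtain ⟨j, rfl, hj⟩ := Walk.mem_support_iff_exists_getVert.mp hw
  rcases lt_trichotomy i j with h | rfl | h
  · exact key i j h hj hadj
  · exact absurd hadj (G.loopless.irrefl _)
  · rw [Sym2.eq_swap]
    exact key j i h hi hadj.symm

/-- If `S` is connected and contains exactly two neighbours `a ≠ c` of a vertex `b ∉ S`, then an
induced path of `S` from `a` to `c` closes up through `b` to a chordless cycle. -/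
lemma exists_chordless_cycle {S : Set V} (hS : (G.induce S).Preconnected) {a b c : V}
    (hb : b ∉ S) (ha : a ∈ S) (hc : c ∈ S) (hac : a ≠ c) (hba : G.Adj b a) (hcb : G.Adj c b)
    (hN : ∀ x ∈ S, G.Adj b x → x = a ∨ x = c) :
    ∃ p : G.Walk a c, (∀ x ∈ p.support, x ∈ S) ∧
      (Walk.cons hba (p.concat hcb)).IsChordlessCycle := by
  obtain ⟨p, hp, hpS, hind⟩ := exists_induced_path hS ha hc
  have hbp : b ∉ p.support := fun h => hb (hpS b h)
  refine ⟨p, hpS, ?_, ?_⟩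
  · rw [Walk.cons_isCycle_iff]
    refine ⟨hp.concat hbp hcb, ?_⟩
    rw [Walk.edges_concat, List.concat_eq_append, List.mem_append, not_or]
    refine ⟨fun h => hbp (p.fst_mem_support_of_mem_edges h), ?_⟩
    have := hba.ne
    simp only [List.mem_singleton, Sym2.eq_iff]
    grind
  · have hbN : ∀ x ∈ p.support, G.Adj b x → s(b, x) = s(b, a) ∨ s(b, x) = s(c, b) := by
      intro x hx hadj
      rcases hN x (hpS x hx) hadj with rfl | rfl
      · exact Or.inl rfl
      · exact Or.inr Sym2.eq_swap
    intro u w hu hw hadj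
    simp only [Walk.support_cons, Walk.support_concat, List.mem_cons,
      List.mem_append, List.not_mem_nil, or_false] at hu hw
    simp only [Walk.edges_cons, Walk.edges_concat, List.concat_eq_append, List.mem_cons,
      List.mem_append, List.not_mem_nil, or_false]
    have hu' : u = b ∨ u ∈ p.support := by tauto
    have hw' : w = b ∨ w ∈ p.support := by tauto
    rcases hu' with rfl | hu' <;> rcases hw' with rfl | hw'
    · exact absurd hadj (G.loopless.irrefl _)
    · rcases hbN w hw' hadj with h | h <;> tauto
    · rw [Sym2.eq_swap]
      rcases hbN u hu' hadj.symm with h | h <;> tauto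
    · exact Or.inr (Or.inl (hind u w hu' hw' hadj))

/-- The local form of cyclic orientability: if `a`, `c` are the only neighbours of `b` in a
connected set `S` avoiding `b`, then exactly one of the edges `ba`, `bc` points away from `b`. -/
lemma dir_iff_dir {o : G.Orientation}
    (ho : ∀ (v : V) (c : G.Walk v v), c.IsChordlessCycle → o.IsCyclicOn c)
    {S : Set V} (hS : (G.induce S).Preconnected) {a b c : V}
    (hb : b ∉ S) (ha : a ∈ S) (hc : c ∈ S) (hac : a ≠ c) (hba : G.Adj b a) (hbc : G.Adj b c)
    (hN : ∀ x ∈ S, G.Adj b x → x = a ∨ x = c) :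
    o.dir b a ↔ ¬ o.dir b c := by
  obtain ⟨p, -, hp⟩ := exists_chordless_cycle hS hb ha hc hac hba hbc.symm hN
  have h1 := o.adj_iff_dir b a hba
  have h2 := o.adj_iff_dir b c hbc
  rcases ho _ _ hp with h | h
  · have := h ⟨(b, a), hba⟩ (by simp)
    have := h ⟨(c, b), hbc.symm⟩ (by simp [Walk.darts_concat])
    simp only at *
    tauto
  · have := h ⟨(b, a), hba⟩ (by simp)
    have := h ⟨(c, b), hbc.symm⟩ (by simp [Walk.darts_concat])
    simp only at *
    tauto

/-- A vertex set with the shape of an induced cycle: each vertex `b` of `C` has exactly two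
neighbours `c ≠ d` in `C`, and deleting `b`, or `b` with one of these neighbours, leaves `C`
connected. -/
def IsHole (G : SimpleGraph V) (C : Set V) : Prop :=
  ∀ b ∈ C, ∃ c d, c ∈ C ∧ d ∈ C ∧ c ≠ d ∧ G.Adj b c ∧ G.Adj b d ∧
    (∀ x ∈ C, G.Adj b x → x = c ∨ x = d) ∧
    (G.induce (C \ {b})).Connected ∧ (G.induce (C \ {b, c})).Connected ∧
    (G.induce (C \ {b, d})).Connected

lemma isHole_support {v : V} {w : G.Walk v v} (hw : w.IsChordlessCycle) :
    IsHole G {x | x ∈ w.support} := by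
  classical
  intro b hb
  obtain ⟨hcyc, hind⟩ := hw
  have hb' : b ∈ w.support := hb
  have hcyc' := hcyc.rotate hb'
  have hsupp : ∀ x, x ∈ w.support ↔ x ∈ (w.rotate b hb').support :=
    fun x => (w.mem_support_rotate_iff b hb').symm
  have hedge : ∀ e, e ∈ w.edges ↔ e ∈ (w.rotate b hb').edges :=
    fun e => (w.rotate_edges b hb').perm.mem_iff.symm
  have hset : {x | x ∈ w.support} = {x | x ∈ (w.rotate b hb').support} := Set.ext hsupp
  simp only [hsupp, hedge] at hind
  rw [hset]
  generalize w.rotate b hb' = r at *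
  clear hsupp hedge hcyc hset
  cases r with
  | nil => exact absurd hcyc' Walk.not_isCycle_nil
  | @cons _ c _ hbc p =>
    cases p with
    | nil => exact absurd hbc (G.loopless.irrefl _)
    | cons h' p' =>
      obtain ⟨d, q, hdb, hpq⟩ := Walk.exists_cons_eq_concat h' p'
      rw [hpq] at hcyc' hind ⊢
      clear hpq
      rw [Walk.cons_isCycle_iff, Walk.concat_isPath_iff] at hcyc'
      obtain ⟨⟨hq, hbq⟩, hne⟩ := hcyc'
      have hcd : c ≠ d := by
        rintro rfl
        exact hne (by simp [Walk.edges_concat, Sym2.eq_swap])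
      have hqn : ¬ q.Nil := Walk.not_nil_of_ne hcd
      have hC : {x | x ∈ (Walk.cons hbc (q.concat hdb)).support} = insert b {x | x ∈ q.support} := by
        ext x
        simp only [Walk.support_cons, Walk.support_concat, List.mem_cons, List.mem_append,
          Set.mem_ofPred_eq, Set.mem_insert_iff, List.not_mem_nil, or_false]
        tauto
      have hnodup := hq.support_nodup
      have e0 : insert b {x | x ∈ q.support} \ {b} = {x | x ∈ q.support} := by
        ext x
        simp only [Set.mem_sdiff, Set.mem_insert_iff, Set.mem_ofPred_eq, Set.mem_singleton_iff]
        grind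
      have e1 : insert b {x | x ∈ q.support} \ {b, c} = {x | x ∈ q.tail.support} := by
        have h := Walk.cons_support_tail hqn
        rw [← h, List.nodup_cons] at hnodup
        ext x
        simp only [Set.mem_sdiff, Set.mem_insert_iff, Set.mem_ofPred_eq, Set.mem_singleton_iff]
        rw [← h] at hbq ⊢
        grind
      have e2 : insert b {x | x ∈ q.support} \ {b, d} = {x | x ∈ q.dropLast.support} := by
        have h := Walk.support_dropLast_concat hqn
        rw [← h] at hnodup
        ext x
        simp only [Set.mem_sdiff, Set.mem_insert_iff, Set.mem_ofPred_eq, Set.mem_singleton_iff]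
        rw [← h] at hbq ⊢
        grind
      rw [hC, e0]
      refine ⟨c, d, by simp, by simp, hcd, hbc, hdb.symm, ?_, q.connected_induce_support, ?_, ?_⟩
      · intro x hx hadj
        rw [← hC] at hx
        have := hind b x (by simp) hx hadj
        simp only [Walk.edges_cons, Walk.edges_concat, List.concat_eq_append, List.mem_cons,
          List.mem_append, List.not_mem_nil, or_false, Sym2.eq_iff] at this
        rcases this with h | h | h
        · grind
        · exact absurd (q.fst_mem_support_of_mem_edges h) hbq
        · grind
      · rw [e1]
        exact q.tail.connected_induce_support
      · rw [e2]
        exact q.dropLast.connected_induce_support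

/-! ### Connected sets of vertices -/

/-- If a connected set `K` is adjacent to every vertex of `T`, a minimal connected subset with
this property contains a single neighbour of some `b ∈ T`: otherwise a vertex of the subset whose
removal does not disconnect it could be discarded. -/
lemma exists_unique_neighbour [Finite V] {T : Set V} (hT : T.Nonempty) (K : Set V)
    (hK : (G.induce K).Connected) (hTK : ∀ t ∈ T, ∃ q ∈ K, G.Adj t q) :
    ∃ L ⊆ K, (G.induce L).Connected ∧ (∀ t ∈ T, ∃ q ∈ L, G.Adj t q) ∧
      ∃ b ∈ T, ∃ q ∈ L, G.Adj b q ∧ ∀ x ∈ L, G.Adj b x → x = q := by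
  induction K using (measure (fun K : Set V => K.ncard)).wf.induction with
  | _ K ih =>
  by_cases hun : ∃ b ∈ T, ∃ q ∈ K, G.Adj b q ∧ ∀ x ∈ K, G.Adj b x → x = q
  · exact ⟨K, subset_rfl, hK, hTK, hun⟩
  · push Not at hun
    obtain ⟨t, ht⟩ := hT
    obtain ⟨q, hq, htq⟩ := hTK t ht
    obtain ⟨r, hr, -, hrq⟩ := hun t ht q hq htq
    have : Nontrivial K := ⟨⟨r, hr⟩, ⟨q, hq⟩, by simpa using hrq⟩
    obtain ⟨⟨v, hv⟩, hconn⟩ :=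
      hK.exists_connected_induce_compl_singleton_of_finite_nontrivial
    have hconn' : (G.induce (K \ {v})).Connected := by
      let f : ((G.induce K).induce ({⟨v, hv⟩}ᶜ : Set K)) →g G.induce (K \ {v}) :=
        { toFun := fun x => ⟨x.1.1, x.1.2, fun h => x.2 (Subtype.ext h)⟩
          map_rel' := fun h => h }
      have hf : Function.Surjective f := fun x =>
        ⟨⟨⟨x.1, x.2.1⟩, fun h => x.2.2 (congrArg Subtype.val h)⟩, rfl⟩
      exact hconn.map f hf
    obtain ⟨L, hLK, hL⟩ := ih (K \ {v})
      (Set.ncard_lt_ncard ⟨Set.sdiff_subset, fun h => (h hv).2 rfl⟩ (Set.toFinite K)) hconn' (by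
        intro t ht
        obtain ⟨q, hq, htq⟩ := hTK t ht
        obtain ⟨r, hr, htr, hrq⟩ := hun t ht q hq htq
        by_cases hqv : q = v
        · exact ⟨r, ⟨hr, fun h => hrq (h.trans hqv.symm)⟩, htr⟩
        · exact ⟨q, ⟨hq, hqv⟩, htq⟩)
    exact ⟨L, hLK.trans Set.sdiff_subset, hL⟩

/-- The component `K` of `x` in `G - C`. The last clause says that it is the least set containing
`x` and closed under passing to neighbours outside `C`. -/
lemma exists_component (C : Set V) {x : V} (hx : x ∉ C) :
    ∃ K : Set V, x ∈ K ∧ (∀ y ∈ K, y ∉ C) ∧ (G.induce K).Connected ∧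
      (∀ y ∈ K, ∀ z, G.Adj y z → z ∈ K ∨ z ∈ C) ∧
      ∀ Y : Set V, x ∈ Y → (∀ y ∈ Y, ∀ z, G.Adj y z → z ∈ Y ∨ z ∈ C) → K ⊆ Y := by
  let R : V → V → Prop := fun u v => G.Adj u v ∧ v ∉ C
  have hreach : ∀ y (h : Relation.ReflTransGen R x y),
      (G.induce {y | Relation.ReflTransGen R x y}).Reachable ⟨x, .refl⟩ ⟨y, h⟩ := by
    intro y h
    induction h with
    | refl => exact Reachable.refl _
    | @tail u v hu huv ih =>
      exact ih.trans (Adj.reachable (G := G.induce _) (u := ⟨u, hu⟩) (v := ⟨v, hu.tail huv⟩) huv.1)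
  refine ⟨{y | Relation.ReflTransGen R x y}, .refl, ?_, ?_, ?_, ?_⟩
  · intro y hy
    rcases Relation.ReflTransGen.cases_tail hy with rfl | ⟨u, -, hu⟩
    · exact hx
    · exact hu.2
  · rw [connected_iff_exists_forall_reachable]
    exact ⟨⟨x, .refl⟩, fun y => hreach y.1 y.2⟩
  · intro y hy z hyz
    by_cases hz : z ∈ C
    · exact Or.inr hz
    · exact Or.inl (Relation.ReflTransGen.tail hy ⟨hyz, hz⟩)
  · intro Y hxY hY y hy
    induction hy with
    | refl => exact hxY
    | tail _ huv ih => exact (hY _ ih _ huv.1).resolve_right huv.2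

/-! ### Attachments to an induced cycle -/

/-- In a cyclically orientable graph a connected set `K` disjoint from an induced cycle `C` is
attached to `C` only at the ends of one edge of `C`. -/
lemma attachments_subset_edge [Finite V] (hco : G.CyclicallyOrientable) {C K : Set V}
    (hC : IsHole G C) (hne : C.Nonempty) (hK : (G.induce K).Connected) (hKC : ∀ y ∈ K, y ∉ C) :
    ∃ b ∈ C, ∃ c ∈ C, G.Adj b c ∧ ∀ t ∈ C, (∃ q ∈ K, G.Adj t q) → t = b ∨ t = c := by
  obtain ⟨o, ho⟩ := hco
  by_contra hcon
  push Not at hcon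
  have hT : {t | t ∈ C ∧ ∃ q ∈ K, G.Adj t q}.Nonempty := by
    obtain ⟨b, hb⟩ := hne
    obtain ⟨c, d, hc, -, -, hbc, -⟩ := hC b hb
    obtain ⟨t, ht, hq, -⟩ := hcon b hb c hc hbc
    exact ⟨t, ht, hq⟩
  obtain ⟨L, hLK, hL, hTL, b, ⟨hb, -⟩, q, hq, hbq, huniq⟩ :=
    exists_unique_neighbour hT K hK (fun t ht => ht.2)
  have hqC : q ∉ C := hKC q (hLK hq)
  have hbL : b ∉ L := fun h => hKC b (hLK h) hb
  obtain ⟨c, d, hc, hd, hcd, hbc, hbd, hN, h0, h1, h2⟩ := hC b hb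
  -- An attachment other than `b` and `d` joins `q` to `c` through `L ∪ (C \ {b, d})`.
  have side : ∀ c d, c ∈ C → d ∈ C → c ≠ d → G.Adj b c → G.Adj b d →
      (∀ x ∈ C, G.Adj b x → x = c ∨ x = d) → (G.induce (C \ {b, d})).Connected →
      (o.dir b q ↔ ¬ o.dir b c) := by
    intro c d hc hd hcd hbc hbd hN hconn
    obtain ⟨t, ht, hq', htb, htd⟩ := hcon b hb d hd hbd
    obtain ⟨r, hr, htr⟩ := hTL t ⟨ht, hq'⟩
    have hS : (G.induce (C \ {b, d} ∪ L)).Connected :=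
      connected_induce_union hconn.preconnected hL.preconnected (v := t) (w := r)
        ⟨ht, by simp [htb, htd]⟩ hr htr
    refine dir_iff_dir ho hS.preconnected ?_ (Or.inr hq) (Or.inl ⟨hc, ?_⟩) ?_ hbq hbc ?_
    · rintro (h | h)
      · exact h.2 (Or.inl rfl)
      · exact hbL h
    · simp [hbc.ne', hcd]
    · rintro rfl
      exact hqC hc
    · rintro x (hx | hx) hbx
      · rcases hN x hx.1 hbx with rfl | rfl
        · exact Or.inr rfl
        · exact absurd (Or.inr rfl) hx.2
      · exact Or.inl (huniq x hx hbx)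
  have s1 := side c d hc hd hcd hbc hbd hN h2
  have s2 := side d c hd hc hcd.symm hbd hbc (fun x hx h => (hN x hx h).symm) h1
  have s3 := dir_iff_dir ho h0.preconnected (fun h => h.2 rfl) ⟨hc, hbc.ne'⟩ ⟨hd, hbd.ne'⟩ hcd
    hbc hbd (fun x hx => hN x hx.1)
  tauto

/-! ### Descending through the components -/

/-- In a two-connected graph, a nonempty set whose outside neighbours lie in `{a, b}` is adjacent
to `a`. -/
lemma exists_adj_of_twoConnected (h2 : G.IsTwoConnected) {a b : V} {K : Set V} (hab : a ≠ b)
    (hKne : K.Nonempty) (ha : a ∉ K) (hb : b ∉ K)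
    (hN : ∀ y ∈ K, ∀ z, G.Adj y z → z ∈ K ∨ z = a ∨ z = b) :
    ∃ q ∈ K, G.Adj a q := by
  obtain ⟨k, hk⟩ := hKne
  have hkb : k ≠ b := fun h => hb (h ▸ hk)
  obtain ⟨w⟩ := (h2.2 b).preconnected ⟨k, hkb⟩ ⟨a, hab⟩
  obtain ⟨d, -, hd1, hd2⟩ := w.exists_boundary_dart {x | x.1 ∈ K} hk ha
  have hadj : G.Adj d.fst.1 d.snd.1 := d.adj
  rcases hN _ hd1 _ hadj with h | h | h
  · exact absurd h hd2
  · exact ⟨d.fst.1, hd1, h ▸ hadj.symm⟩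
  · exact absurd h d.snd.2

/-- An induced cycle through the edge `ab` and otherwise inside `K`. -/
lemma exists_hole [Finite V] {a b : V} {K : Set V} (hab : G.Adj a b)
    (hK : (G.induce K).Connected) (ha : a ∉ K) (hb : b ∉ K)
    (haK : ∃ q ∈ K, G.Adj a q) (hbK : ∃ q ∈ K, G.Adj b q) :
    ∃ C : Set V, IsHole G C ∧ a ∈ C ∧ b ∈ C ∧ (∀ x ∈ C, x ∈ K ∨ x = a ∨ x = b) ∧
      ∃ c ∈ C, c ∈ K := by
  obtain ⟨L, hLK, hL, hTL, hun⟩ := exists_unique_neighbour (T := {a, b}) ⟨a, Or.inl rfl⟩ K hK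
    (by rintro t (rfl | rfl) <;> assumption)
  -- The end of `ab` with a unique neighbour in `L` plays the role of the closing vertex.
  have main : ∀ a b, G.Adj a b → a ∉ K → b ∉ K → (∃ q ∈ L, G.Adj a q) →
      (∃ q ∈ L, G.Adj b q ∧ ∀ x ∈ L, G.Adj b x → x = q) →
      ∃ C : Set V, IsHole G C ∧ a ∈ C ∧ b ∈ C ∧ (∀ x ∈ C, x ∈ K ∨ x = a ∨ x = b) ∧
        ∃ c ∈ C, c ∈ K := by
    rintro a b hab ha hb ⟨r, hr, har⟩ ⟨q, hq, hbq, huniq⟩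
    have hS : (G.induce ({a} ∪ L)).Connected :=
      connected_induce_union (by simp) hL.preconnected (v := a) (w := r) rfl hr har
    obtain ⟨p, hp, hcyc⟩ := exists_chordless_cycle (b := b) (a := a) (c := q) hS.preconnected
      (by
        rintro (h | h)
        · exact hab.ne' h
        · exact hb (hLK h))
      (Or.inl rfl) (Or.inr hq) (by rintro rfl; exact ha (hLK hq)) hab.symm hbq.symm
      (by
        rintro x (hx | hx) hbx
        · exact Or.inl hx
        · exact Or.inr (huniq x hx hbx))
    refine ⟨_, isHole_support hcyc, by simp, by simp, ?_, q, by simp, hLK hq⟩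
    intro x hx
    simp only [Walk.support_cons, Walk.support_concat, List.mem_cons, List.mem_append,
      Set.mem_ofPred_eq, List.not_mem_nil, or_false] at hx
    rcases hx with h | h | h
    · exact Or.inr (Or.inr h)
    · rcases hp x h with h | h
      · exact Or.inr (Or.inl h)
      · exact Or.inl (hLK h)
    · exact Or.inr (Or.inr h)
  obtain ⟨t, rfl | rfl, ht⟩ := hun
  · obtain ⟨C, h1, h2, h3, h4, h5⟩ := main b t hab.symm hb ha (hTL b (Or.inr rfl)) ht
    exact ⟨C, h1, h3, h2, fun x hx => (h4 x hx).imp_right Or.symm, h5⟩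
  · exact main a t hab ha hb (hTL a (Or.inl rfl)) ht

/-- If `ab` is an edge and `K` is a component of `G - {a, b}`, then `K` contains a vertex of
degree two. By induction on `K`: an induced cycle `C` through `ab` and `K` either covers `K`, or
misses a smaller component attached to the ends of a single edge of `C`. -/
lemma exists_degree_two_mem [Fintype V] [DecidableRel G.Adj] (h2 : G.IsTwoConnected)
    (hco : G.CyclicallyOrientable) (K : Set V) (a b : V) (hab : G.Adj a b)
    (hK : (G.induce K).Connected) (ha : a ∉ K) (hb : b ∉ K)
    (hN : ∀ y ∈ K, ∀ z, G.Adj y z → z ∈ K ∨ z = a ∨ z = b) :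
    ∃ v ∈ K, G.degree v = 2 := by
  induction K using (measure (fun K : Set V => K.ncard)).wf.induction generalizing a b with
  | _ K ih =>
  have hKne : K.Nonempty := Set.nonempty_coe_sort.mp hK.nonempty
  obtain ⟨C, hC, haC, hbC, hCK, c, hcC, hcK⟩ := exists_hole hab hK ha hb
    (exists_adj_of_twoConnected h2 hab.ne hKne ha hb hN)
    (exists_adj_of_twoConnected h2 hab.ne' hKne hb ha
      (fun y hy z h => (hN y hy z h).imp_right Or.symm))
  by_cases hcov : K ⊆ C
  · refine ⟨c, hcK, ?_⟩
    obtain ⟨d, e, -, -, hde, hcd, hce, hNc, -⟩ := hC c hcC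
    classical
    have : G.neighborFinset c = {d, e} := by
      ext x
      rw [mem_neighborFinset, Finset.mem_insert, Finset.mem_singleton]
      constructor
      · intro h
        refine hNc x ?_ h
        rcases hN c hcK x h with h | rfl | rfl
        · exact hcov h
        · exact haC
        · exact hbC
      · rintro (rfl | rfl) <;> assumption
    rw [← card_neighborFinset_eq_degree, this, Finset.card_pair hde]
  · obtain ⟨x, hxK, hxC⟩ := Set.not_subset.mp hcov
    obtain ⟨K', hxK', hK'C, hK', hN', hmin⟩ := exists_component (G := G) C hxC
    have hsub : K' ⊆ K := hmin K hxK (fun y hy z h => (hN y hy z h).imp_right (by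
      rintro (rfl | rfl) <;> assumption))
    obtain ⟨a', ha', b', hb', hab', hatt⟩ := attachments_subset_edge hco hC ⟨c, hcC⟩ hK' hK'C
    obtain ⟨v, hv, hdeg⟩ := ih K'
      (Set.ncard_lt_ncard ⟨hsub, fun h => hK'C c (h hcK) hcC⟩ (Set.toFinite K)) a' b' hab' hK'
      (fun h => hK'C a' h ha') (fun h => hK'C b' h hb')
      (fun y hy z h => (hN' y hy z h).imp_right (fun hz => hatt z hz ⟨y, hy, h.symm⟩))
    exact ⟨v, hsub hv, hdeg⟩

end CyclicOrientation

/-- Every two-connected cyclically orientable finite simple graph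
with at least 3 vertices has a vertex of degree 2. -/
theorem twoConnected_co_exists_degree_two {V : Type*} [Fintype V] [DecidableEq V]
    (G : SimpleGraph V) [DecidableRel G.Adj] (h2 : G.IsTwoConnected)
    (hco : G.CyclicallyOrientable) (hn : 3 ≤ Fintype.card V) :
    ∃ v : V, G.degree v = 2 := by
  classical
  have : Nontrivial V := Fintype.one_lt_card_iff_nontrivial.mp (by omega)
  obtain ⟨a⟩ := h2.1.nonempty
  obtain ⟨b, hab⟩ := h2.1.preconnected.exists_adj_of_nontrivial a
  obtain ⟨x, hx⟩ : ∃ x, x ∉ ({a, b} : Finset V) := by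
    by_contra! h
    have := Finset.card_le_card (fun x _ => h x : (Finset.univ : Finset V) ⊆ {a, b})
    have := Finset.card_le_two (a := a) (b := b)
    rw [Finset.card_univ] at *
    omega
  obtain ⟨K, -, hKC, hK, hN, -⟩ :=
    CyclicOrientation.exists_component (G := G) {a, b} (x := x) (by simpa using hx)
  obtain ⟨v, -, hv⟩ := CyclicOrientation.exists_degree_two_mem h2 hco K a b hab hK
    (fun h => hKC a h (Or.inl rfl)) (fun h => hKC b h (Or.inr rfl)) hN
  exact ⟨v, hv⟩
end

section
/- Let G be a two-connected cyclically orientable finite simple graph with n vertices, where n ≥ 3. Then G has at most n − 2 chordless cycles. -/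
/-!
Only one consequence of cyclic orientability is used. Call two neighbours `x`, `y` of a vertex `u`
*linked* if they are joined by a walk whose interior avoids `u` and all neighbours of `u`. A
shortest such walk closes up through `u` to a chordless cycle, so one of the edges `u x`, `u y`
enters `u` and the other leaves it (`linked_dir`). Hence three neighbours of `u` are never pairwise
linked (`not_linked_three`).

This controls how a connected set `K` disjoint from a chordless cycle `C` is attached to `C`: the
vertices of `C` with a neighbour in `K` are contained in an edge of `C`
(`CycSet.edgeAttached`). Two nonadjacent attachment vertices, or three attachment vertices forming
a triangle, would each produce three pairwise linked neighbours of some vertex.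

The count then follows by growing a vertex set `S`, starting from an edge, under the invariant that
every connected set disjoint from `S` is attached to `S` within an edge. If `S` is not everything,
a component `K` of `G - S` is attached to both ends of an edge `x y` of `S` by two-connectedness.
Adding a chordless cycle `C` consisting of `x`, `y` and vertices of `K` preserves the invariant,
adds at least one vertex, and creates no chordless cycle other than `C`, because the edge `x y`
separates `C` from the rest of `S` (`grow`). So the number of chordless cycles inside `S` is always
at most `|S| - 2`.
-/


open SimpleGraph

variable {V : Type*}

/-! ### Induced subgraphs and connectivity -/

/-- The subgraph of `G` induced on `A`, kept on the full vertex type `V` (the vertices outside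
`A` become isolated). -/
def within (G : SimpleGraph V) (A : Set V) : SimpleGraph V where
  Adj a b := G.Adj a b ∧ a ∈ A ∧ b ∈ A
  symm := ⟨fun _ _ h => ⟨h.1.symm, h.2.2, h.2.1⟩⟩
  loopless := ⟨fun _ h => G.loopless.irrefl _ h.1⟩

/-- The vertex set `A` induces a connected (possibly empty) subgraph of `G`. -/
def Conn (G : SimpleGraph V) (A : Set V) : Prop :=
  ∀ x ∈ A, ∀ y ∈ A, (within G A).Reachable x y

lemma within_mono {G : SimpleGraph V} {A B : Set V} (h : A ⊆ B) : within G A ≤ within G B :=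
  fun _ _ hab => ⟨hab.1, h hab.2.1, h hab.2.2⟩

lemma reach_mono {G : SimpleGraph V} {A B : Set V} (h : A ⊆ B) {x y : V}
    (hr : (within G A).Reachable x y) : (within G B).Reachable x y :=
  hr.mono (within_mono h)

lemma reach_adj {G : SimpleGraph V} {A : Set V} {x y : V} (h : G.Adj x y) (hx : x ∈ A)
    (hy : y ∈ A) : (within G A).Reachable x y :=
  SimpleGraph.Adj.reachable (G := within G A) ⟨h, hx, hy⟩

/-- A set closed under adjacency is closed under reachability. -/
lemma reach_closed {G : SimpleGraph V} {T : Set V}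
    (hT : ∀ a b, G.Adj a b → a ∈ T → b ∈ T) {x y : V} (hr : G.Reachable x y)
    (hx : x ∈ T) : y ∈ T := by
  rw [reachable_iff_reflTransGen] at hr
  induction hr with
  | refl => exact hx
  | tail _ hbc ih => exact hT _ _ hbc ih

lemma reach_mem {G : SimpleGraph V} {A : Set V} {x y : V}
    (hr : (within G A).Reachable x y) (hx : x ∈ A) : y ∈ A :=
  reach_closed (G := within G A) (fun _ _ h _ => h.2.2) hr hx

/-- On a walk inside `K` starting in `P`, there is a last vertex `z` satisfying `P`. -/
lemma reach_last {G : SimpleGraph V} {K : Set V} (P : V → Prop) {k k' : V} (hk : k ∈ K)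
    (hP : P k) (hr : (within G K).Reachable k k') :
    ∃ z ∈ K, P z ∧ (within G {v | v = z ∨ (v ∈ K ∧ ¬ P v)}).Reachable z k' := by
  rw [reachable_iff_reflTransGen] at hr
  induction hr with
  | refl => exact ⟨k, hk, hP, Reachable.refl _⟩
  | @tail m n _ hmn ih =>
    obtain ⟨z, hzK, hPz, hz⟩ := ih
    by_cases hn : P n
    · exact ⟨n, hmn.2.2, hn, Reachable.refl _⟩
    · refine ⟨z, hzK, hPz, hz.trans (reach_adj hmn.1 ?_ (Or.inr ⟨hmn.2.2, hn⟩))⟩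
      exact reach_mem hz (Or.inl rfl)

lemma reach_of_walk {G : SimpleGraph V} {B : Set V} {x y : V} (q : G.Walk x y)
    (h : ∀ w ∈ q.support, w ∈ B) : ∀ w ∈ q.support, (within G B).Reachable x w := by
  induction q with
  | nil => intro w hw; simp at hw; subst hw; exact Reachable.refl _
  | cons hadj q ih =>
    intro w hw
    simp only [Walk.support_cons, List.mem_cons, forall_eq_or_imp] at h hw
    rcases hw with rfl | hw
    · exact Reachable.refl _
    · exact (reach_adj hadj h.1 (h.2 _ q.start_mem_support)).trans (ih h.2 w hw)

lemma conn_support {G : SimpleGraph V} {x y : V} (q : G.Walk x y) :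
    Conn G {w | w ∈ q.support} := fun a ha b hb =>
  (reach_of_walk q (fun _ h => h) a ha).symm.trans (reach_of_walk q (fun _ h => h) b hb)

lemma conn_component {G : SimpleGraph V} {A : Set V} (k : V) :
    Conn G {v | (within G A).Reachable k v} := by
  have key : ∀ v, (within G A).Reachable k v →
      (within G {v | (within G A).Reachable k v}).Reachable k v := by
    intro v hv
    rw [reachable_iff_reflTransGen] at hv
    induction hv with
    | refl => exact Reachable.refl _
    | @tail m n h1 h2 ih =>
      have hm : (within G A).Reachable k m := (reachable_iff_reflTransGen _ _).2 h1
      exact ih.trans (reach_adj h2.1 hm (hm.trans (SimpleGraph.Adj.reachable h2)))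
  exact fun a ha b hb => (key a ha).symm.trans (key b hb)

/-! ### Vertex sets of chordless cycles -/

/-- The features of the vertex set `A` of a chordless cycle used in the counting argument:
`G[A]` is connected and 2-regular, and stays connected when the ends of an edge of `G` are
removed from it. -/
structure CycSet (G : SimpleGraph V) (A : Set V) : Prop where
  nonempty : A.Nonempty
  conn : Conn G A
  nbrs : ∀ u ∈ A, ∃ p q, p ≠ q ∧ p ∈ A ∧ q ∈ A ∧ G.Adj u p ∧ G.Adj u q ∧
    ∀ w ∈ A, G.Adj u w → w = p ∨ w = q
  conn_sdiff : ∀ x y, G.Adj x y → Conn G (A \ {x, y})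

/-- A cycle through `u` is `u` together with a path `q` avoiding `u`, whose ends are the two
neighbours of `u` on the cycle. -/
lemma chordless_split {G : SimpleGraph V} {v : V} {c : G.Walk v v} (hc : c.IsChordlessCycle)
    {u : V} (hu : u ∈ c.support) :
    ∃ (p0 q0 : V) (q : G.Walk p0 q0), q.IsPath ∧ u ∉ q.support ∧ p0 ≠ q0 ∧ G.Adj u p0 ∧
      G.Adj u q0 ∧ (∀ w, w ∈ c.support ↔ w = u ∨ w ∈ q.support) ∧
      ∀ w ∈ c.support, G.Adj u w → w = p0 ∨ w = q0 := by
  classical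
  obtain ⟨hcyc, hch⟩ := hc
  have h1 := hcyc.rotate hu
  have h2 := fun w => Walk.mem_support_rotate_iff (w := w) c u hu
  have h3 : ∀ e, e ∈ (c.rotate u hu).edges ↔ e ∈ c.edges :=
    fun e => (c.rotate_edges u hu).mem_iff
  generalize c.rotate u hu = c' at h1 h2 h3
  cases c' with
  | nil => exact absurd h1 (by simp)
  | @cons _ p0 _ h p =>
    rw [Walk.cons_isCycle_iff] at h1
    cases p with
    | nil => exact absurd h (G.loopless.irrefl _)
    | cons ha p =>
      obtain ⟨q0, q, h', hq⟩ := Walk.exists_cons_eq_concat ha p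
      rw [hq] at h1 h2 h3
      rw [Walk.concat_isPath_iff] at h1
      refine ⟨p0, q0, q, h1.1.1, h1.1.2, ?_, h, h'.symm, ?_, ?_⟩
      · rintro rfl
        apply h1.2
        simp [Walk.edges_concat, Sym2.eq_swap]
      · intro w
        rw [← h2]
        simp only [Walk.support_cons, Walk.support_concat, List.mem_cons, List.mem_append]
        simp; tauto
      · intro w hw hadj
        have := (h3 _).2 (hch u w hu hw hadj)
        simp only [Walk.edges_cons, Walk.edges_concat, List.mem_cons, List.concat_eq_append,
          List.mem_append, List.not_mem_nil, or_false] at this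
        rcases this with h | h | h
        · rcases Sym2.eq_iff.1 h with ⟨-, h⟩ | ⟨-, h⟩
          · exact Or.inl h
          · exact absurd h.symm hadj.ne
        · exact absurd (q.fst_mem_support_of_mem_edges h) h1.1.2
        · rcases Sym2.eq_iff.1 h with ⟨-, h⟩ | ⟨-, h⟩
          · exact absurd h.symm hadj.ne
          · exact Or.inr h

/-- Deleting the initial vertex of a path leaves a connected set. -/
lemma conn_path_sdiff_start {G : SimpleGraph V} {x y : V} {q : G.Walk x y} (hq : q.IsPath) :
    Conn G ({w | w ∈ q.support} \ {x}) := by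
  cases q with
  | nil => intro a ha; simp at ha
  | cons h q =>
    rw [Walk.cons_isPath_iff] at hq
    convert conn_support q using 1
    ext w
    simp only [Walk.support_cons, List.mem_cons, Set.mem_sdiff, Set.mem_ofPred_eq,
      Set.mem_singleton_iff]
    constructor
    · tauto
    · intro hw
      exact ⟨Or.inr hw, fun h => hq.2 (h ▸ hw)⟩

lemma cycSet_of_chordless {G : SimpleGraph V} {v : V} {c : G.Walk v v}
    (hc : c.IsChordlessCycle) : CycSet G {w | w ∈ c.support} := by
  have key : ∀ x ∈ c.support, ∀ y, G.Adj x y → Conn G ({w | w ∈ c.support} \ {x, y}) := by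
    intro x hx y hxy
    obtain ⟨p0, q0, q, hq, hxq, -, -, -, hs, hn⟩ := chordless_split hc hx
    by_cases hy : y ∈ c.support
    · rcases hn y hy hxy with rfl | rfl
      · convert conn_path_sdiff_start hq using 1
        ext w
        simp only [Set.mem_sdiff, Set.mem_ofPred_eq, hs, Set.mem_insert_iff, Set.mem_singleton_iff]
        constructor
        · tauto
        · rintro ⟨h1, h2⟩
          exact ⟨Or.inr h1, fun h => h.elim (fun h => hxq (h ▸ h1)) h2⟩
      · convert conn_path_sdiff_start hq.reverse using 1
        ext w
        simp only [Set.mem_sdiff, Set.mem_ofPred_eq, hs, Set.mem_insert_iff, Set.mem_singleton_iff,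
          Walk.support_reverse, List.mem_reverse]
        constructor
        · tauto
        · rintro ⟨h1, h2⟩
          exact ⟨Or.inr h1, fun h => h.elim (fun h => hxq (h ▸ h1)) h2⟩
    · convert conn_support q using 1
      ext w
      simp only [Set.mem_sdiff, Set.mem_ofPred_eq, hs, Set.mem_insert_iff, Set.mem_singleton_iff]
      constructor
      · tauto
      · intro h1
        refine ⟨Or.inr h1, fun h => h.elim (fun h => hxq (h ▸ h1)) ?_⟩
        rintro rfl
        exact hy ((hs _).2 (Or.inr h1))
  refine ⟨⟨v, c.start_mem_support⟩, conn_support c, ?_, ?_⟩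
  · intro u hu
    obtain ⟨p0, q0, q, hq, hxq, hne, h1, h2, hs, hn⟩ := chordless_split hc hu
    exact ⟨p0, q0, hne, (hs _).2 (Or.inr q.start_mem_support),
      (hs _).2 (Or.inr q.end_mem_support), h1, h2, hn⟩
  · intro x y hxy
    by_cases hx : x ∈ c.support
    · exact key x hx y hxy
    by_cases hy : y ∈ c.support
    · rw [Set.pair_comm]
      exact key y hy x hxy.symm
    · convert conn_support c using 1
      ext w
      simp only [Set.mem_sdiff, Set.mem_ofPred_eq, Set.mem_insert_iff, Set.mem_singleton_iff]
      constructor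
      · tauto
      · intro h
        refine ⟨h, ?_⟩
        rintro (rfl | rfl) <;> contradiction

lemma CycSet.exists_ne {G : SimpleGraph V} {A : Set V} (h : CycSet G A) (x y : V) :
    ∃ z ∈ A, z ≠ x ∧ z ≠ y := by
  obtain ⟨u, hu⟩ := h.nonempty
  obtain ⟨p, q, hpq, hp, hq, hup, huq, -⟩ := h.nbrs u hu
  have h1 := hup.ne
  have h2 := huq.ne
  by_contra! hcon
  rcases em (u = x) with rfl | h3
  · exact hpq ((hcon p hp h1.symm).trans (hcon q hq h2.symm).symm)
  · rcases em (p = x) with rfl | h4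
    · exact h2 ((hcon u hu h3).trans (hcon q hq hpq.symm).symm)
    · exact h1 ((hcon u hu h3).trans (hcon p hp h4).symm)

lemma CycSet.eq_of_subset {G : SimpleGraph V} {A C : Set V} (hA : CycSet G A)
    (hC : CycSet G C) (hAC : A ⊆ C) : A = C := by
  refine hAC.antisymm fun c hc => ?_
  obtain ⟨a, ha⟩ := hA.nonempty
  refine reach_closed (G := within G C) (T := A) ?_ (hC.conn a (hAC ha) c hc) ha
  intro s t hst hs
  obtain ⟨p, q, hpq, hp, hq, hup, huq, -⟩ := hA.nbrs s hs
  obtain ⟨p', q', -, -, -, -, -, hall⟩ := hC.nbrs s (hAC hs)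
  have h1 := hall p (hAC hp) hup
  have h2 := hall q (hAC hq) huq
  have h3 := hall t hst.2.2 hst.1
  grind

/-! ### Producing chordless cycles from shortest walks -/

/-- The subgraph of `G` induced on `B`, with the edge `u x` deleted. -/
def cutEdge (G : SimpleGraph V) (B : Set V) (u x : V) : SimpleGraph V where
  Adj a b := G.Adj a b ∧ a ∈ B ∧ b ∈ B ∧ s(a, b) ≠ s(u, x)
  symm := ⟨fun _ _ h => ⟨h.1.symm, h.2.2.1, h.2.1, by rw [Sym2.eq_swap]; exact h.2.2.2⟩⟩
  loopless := ⟨fun _ h => G.loopless.irrefl _ h.1⟩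

lemma mem_edges_of_shortest {H : SimpleGraph V} {x y : V} (p : H.Walk x y)
    (hp : p.length = H.dist x y) {a b : V} (ha : a ∈ p.support) (hb : b ∈ p.support)
    (hab : H.Adj a b) : s(a, b) ∈ p.edges := by
  -- It suffices to treat the case that `b` comes after `a` on `p`.
  have main : ∀ (a b : V) (q : H.Walk x a) (r : H.Walk a y), p = q.append r → H.Adj a b →
      b ∈ r.support → s(a, b) ∈ p.edges := by
    intro a b q r hpq hab hb
    obtain ⟨r1, r2, rfl⟩ := Walk.mem_support_iff_exists_append.1 hb
    have h1 := dist_le (q.append (Walk.cons hab r2))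
    rw [← hp, hpq] at h1
    simp only [Walk.length_append, Walk.length_cons] at h1
    cases r1 with
    | nil => exact absurd hab (H.loopless.irrefl _)
    | cons h r1 =>
      cases r1 with
      | nil => rw [hpq]; simp
      | cons h' r1 => simp at h1; omega
  obtain ⟨q, r, hqr⟩ := Walk.mem_support_iff_exists_append.1 ha
  have hb' := hb
  rw [hqr, Walk.mem_support_append_iff] at hb'
  rcases hb' with hb' | hb'
  · obtain ⟨q1, q2, rfl⟩ := Walk.mem_support_iff_exists_append.1 hb'
    rw [Sym2.eq_swap]
    exact main b a q1 (q2.append r) (by rw [hqr, Walk.append_assoc]) hab.symm (by simp)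
  · exact main a b q r hqr hab hb'

/-- If `x` and its neighbour `u` stay joined in `G[B]` after deleting the edge `u x`, a shortest
such connection together with that edge is a chordless cycle. -/
lemma exists_chordless {G : SimpleGraph V} {B : Set V} {u x : V} (hux : G.Adj u x)
    (hu : u ∈ B) (hr : (cutEdge G B u x).Reachable x u) :
    ∃ c : G.Walk u u, c.IsChordlessCycle ∧ (∀ w ∈ c.support, w ∈ B) ∧ x ∈ c.support ∧
      (∃ d ∈ c.darts, d.toProd = (u, x)) ∧
      ∃ y, (cutEdge G B u x).Adj y u ∧ ∃ d ∈ c.darts, d.toProd = (y, u) := by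
  obtain ⟨p, hp⟩ := hr.exists_walk_length_eq_dist
  have hle : cutEdge G B u x ≤ G := fun _ _ h => h.1
  have hpath := p.isPath_of_length_eq_dist hp
  have hsupp : ∀ w ∈ p.support, w ∈ B := by
    intro w hw
    obtain ⟨-, r, -⟩ := Walk.mem_support_iff_exists_append.1 hw
    exact reach_closed (G := cutEdge G B u x) (T := B) (fun _ _ h _ => h.2.2.1) r.reachable.symm hu
  refine ⟨Walk.cons hux (p.mapLe hle), ⟨?_, ?_⟩, ?_, ?_, ?_, ?_⟩
  · rw [Walk.cons_isCycle_iff, Walk.edges_mapLe_eq_edges]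
    refine ⟨(Walk.isPath_mapLe hle).2 hpath, fun h => ?_⟩
    exact (p.adj_of_mem_edges h).2.2.2 rfl
  · have hsub : ∀ w, w ∈ (Walk.cons hux (p.mapLe hle)).support → w ∈ p.support := by
      intro w hw
      simp only [Walk.support_cons, Walk.support_mapLe_eq_support, List.mem_cons] at hw
      rcases hw with rfl | hw
      · exact p.end_mem_support
      · exact hw
    intro a b ha hb hab
    simp only [Walk.edges_cons, Walk.edges_mapLe_eq_edges, List.mem_cons]
    by_cases he : s(a, b) = s(u, x)
    · exact Or.inl he
    · exact Or.inr (mem_edges_of_shortest p hp (hsub a ha) (hsub b hb)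
        ⟨hab, hsupp a (hsub a ha), hsupp b (hsub b hb), he⟩)
  · intro w hw
    simp only [Walk.support_cons, Walk.support_mapLe_eq_support, List.mem_cons] at hw
    rcases hw with rfl | hw
    · exact hu
    · exact hsupp w hw
  · simp
  · exact ⟨⟨(u, x), hux⟩, by simp, rfl⟩
  · cases p with
    | nil => exact absurd hux (G.loopless.irrefl _)
    | cons h p =>
      obtain ⟨y, q, hy, hq⟩ := Walk.exists_cons_eq_concat h p
      rw [hq]
      refine ⟨y, hy, ⟨(y, u), hy.1⟩, ?_, rfl⟩
      simp [Walk.mapLe, Walk.darts_map, Walk.darts_concat]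

/-! ### Linked neighbours of a vertex -/

/-- The neighbours `x` and `y` of `u` are joined by a walk none of whose interior vertices is
`u` or a neighbour of `u`. -/
def Linked (G : SimpleGraph V) (u x y : V) : Prop :=
  (within G {w | w = x ∨ w = y ∨ (w ≠ u ∧ ¬ G.Adj u w)}).Reachable x y

/-- An orientation that makes every chordless cycle cyclic. -/
def IsCO {G : SimpleGraph V} (o : G.Orientation) : Prop :=
  ∀ (v : V) (c : G.Walk v v), c.IsChordlessCycle → o.IsCyclicOn c

/-- Linked neighbours of `u` lie with `u` on a chordless cycle, so exactly one of the two edges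
leaves `u`. -/
lemma linked_dir {G : SimpleGraph V} {o : G.Orientation} (ho : IsCO o) {u x y : V}
    (hx : G.Adj u x) (hy : G.Adj u y) (hxy : x ≠ y) (hl : Linked G u x y) :
    o.dir u x ↔ ¬ o.dir u y := by
  set L : Set V := {w | w = x ∨ w = y ∨ (w ≠ u ∧ ¬ G.Adj u w)} with hL
  have huL : u ∉ L := by
    rintro (h | h | h)
    · exact hx.ne h
    · exact hy.ne h
    · exact h.1 rfl
  have hle : within G L ≤ cutEdge G (insert u L) u x := by
    intro a b hab
    refine ⟨hab.1, Or.inr hab.2.1, Or.inr hab.2.2, fun he => ?_⟩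
    rcases Sym2.eq_iff.1 he with ⟨h1, -⟩ | ⟨-, h1⟩
    · exact huL (h1 ▸ hab.2.1)
    · exact huL (h1 ▸ hab.2.2)
  have hyu : (cutEdge G (insert u L) u x).Adj y u := by
    refine ⟨hy.symm, Or.inr (Or.inr (Or.inl rfl)), Or.inl rfl, fun he => ?_⟩
    rcases Sym2.eq_iff.1 he with ⟨h1, -⟩ | ⟨h1, -⟩
    · exact hy.ne h1.symm
    · exact hxy h1.symm
  have hr : (cutEdge G (insert u L) u x).Reachable x u :=
    (Reachable.mono hle hl).trans (SimpleGraph.Adj.reachable hyu)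
  obtain ⟨c, hc, -, -, ⟨d1, hd1, he1⟩, y', hy', d2, hd2, he2⟩ :=
    exists_chordless hx (Or.inl rfl) hr
  have hyy : y' = y := by
    rcases hy'.2.1 with h | h | h | h
    · exact absurd h.symm hy'.1.symm.ne
    · subst h
      exact absurd (Sym2.eq_swap) hy'.2.2.2
    · exact h
    · exact absurd hy'.1.symm h.2
  subst hyy
  have h1 := o.adj_iff_dir u x hx
  have h2 := o.adj_iff_dir u y' hy
  rcases ho u c hc with h | h
  · have e1 := h d1 hd1
    have e2 := h d2 hd2
    rw [he1] at e1
    rw [he2] at e2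
    simp only at e1 e2
    tauto
  · have e1 := h d1 hd1
    have e2 := h d2 hd2
    rw [he1] at e1
    rw [he2] at e2
    simp only at e1 e2
    tauto

/-- Three neighbours cannot be pairwise linked: an edge at `u` has only two directions. -/
lemma not_linked_three {G : SimpleGraph V} {o : G.Orientation} (ho : IsCO o) {u x y z : V}
    (hx : G.Adj u x) (hy : G.Adj u y) (hz : G.Adj u z) (hxy : x ≠ y) (hxz : x ≠ z) (hyz : y ≠ z)
    (h1 : Linked G u x y) (h2 : Linked G u x z) (h3 : Linked G u y z) : False := by
  have e1 := linked_dir ho hx hy hxy h1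
  have e2 := linked_dir ho hx hz hxz h2
  have e3 := linked_dir ho hy hz hyz h3
  tauto

/-! ### Attachments of a connected set to a chordless cycle -/

/-- Two vertices of a chordless cycle `C` with neighbours in a common connected set `K` off `C`
are adjacent. Otherwise the last neighbour `z ∈ K` of `u` on the way to the other vertex would be
linked at `u` to both neighbours of `u` on `C`. -/
lemma attach_adj {G : SimpleGraph V} {o : G.Orientation} (ho : IsCO o) {C K : Set V}
    (hC : CycSet G C) (hK : Conn G K) (hd : Disjoint K C) {u w k k' : V} (hu : u ∈ C)
    (hw : w ∈ C) (huw : u ≠ w) (hk : k ∈ K) (hk' : k' ∈ K) (huk : G.Adj u k)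
    (hwk : G.Adj w k') : G.Adj u w := by
  by_contra hna
  have hKC : ∀ a ∈ K, a ∉ C := fun a h1 h2 => Set.disjoint_left.1 hd h1 h2
  obtain ⟨p, q, hpq, hp, hq, hup, huq, hall⟩ := hC.nbrs u hu
  have hwp : w ≠ p := fun h => hna (h ▸ hup)
  have hwq : w ≠ q := fun h => hna (h ▸ huq)
  obtain ⟨z, hzK, hz, hzr⟩ := reach_last (G.Adj u) hk huk (hK k hk k' hk')
  have hpw : (within G (C \ {u, q})).Reachable w p :=
    hC.conn_sdiff u q huq w ⟨hw, by simp [huw.symm, hwq]⟩ p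
      ⟨hp, by simp [hup.ne', hpq]⟩
  have hqw : (within G (C \ {u, p})).Reachable w q :=
    hC.conn_sdiff u p hup w ⟨hw, by simp [huw.symm, hwp]⟩ q
      ⟨hq, by simp [huq.ne', hpq.symm]⟩
  have hzw : (within G {v | v = z ∨ (v ≠ u ∧ ¬ G.Adj u v)}).Reachable z w := by
    have h1 : (within G {v | v = z ∨ (v ≠ u ∧ ¬ G.Adj u v)}).Reachable z k' := by
      refine reach_mono ?_ hzr
      rintro v (h | h)
      · exact Or.inl h
      · exact Or.inr ⟨fun e => hKC v h.1 (e ▸ hu), h.2⟩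
    exact h1.trans (reach_adj hwk.symm (reach_mem h1 (Or.inl rfl)) (Or.inr ⟨huw.symm, hna⟩))
  have hsub : ∀ v ∈ C, v ≠ u → v = p ∨ v = q ∨ (v ≠ u ∧ ¬ G.Adj u v) := by
    intro v hv hvu
    by_cases h : G.Adj u v
    · rcases hall v hv h with h | h
      · exact Or.inl h
      · exact Or.inr (Or.inl h)
    · exact Or.inr (Or.inr ⟨hvu, h⟩)
  have hne : ∀ v ∈ C, z ≠ v := fun v hv h => hKC z hzK (h ▸ hv)
  refine not_linked_three ho hz hup huq (hne p hp) (hne q hq) hpq ?_ ?_ ?_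
  · refine (reach_mono ?_ hzw).trans (reach_mono ?_ hpw)
    · rintro v (h | h)
      · exact Or.inl h
      · exact Or.inr (Or.inr h)
    · rintro v ⟨hv, h⟩
      simp only [Set.mem_insert_iff, Set.mem_singleton_iff, not_or] at h
      rcases hsub v hv h.1 with h' | h' | h'
      · exact Or.inr (Or.inl h')
      · exact absurd h' h.2
      · exact Or.inr (Or.inr h')
  · refine (reach_mono ?_ hzw).trans (reach_mono ?_ hqw)
    · rintro v (h | h)
      · exact Or.inl h
      · exact Or.inr (Or.inr h)
    · rintro v ⟨hv, h⟩
      simp only [Set.mem_insert_iff, Set.mem_singleton_iff, not_or] at h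
      rcases hsub v hv h.1 with h' | h' | h'
      · exact absurd h' h.2
      · exact Or.inr (Or.inl h')
      · exact Or.inr (Or.inr h')
  · refine (reach_mono ?_ hpw.symm).trans (reach_mono ?_ hqw) <;>
    · rintro v ⟨hv, h⟩
      simp only [Set.mem_insert_iff, Set.mem_singleton_iff, not_or] at h
      exact hsub v hv h.1

/-- No connected set is attached to all three vertices of a triangle it avoids. On a walk in `K`
to a neighbour of `c`, suppose (by symmetry) that `a` has a neighbour `z` at or after the last
neighbour of `b`; then that last neighbour of `b`, together with `a` and `c`, is pairwise linked
at `b`. -/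
lemma no_triangle_attach {G : SimpleGraph V} {o : G.Orientation} (ho : IsCO o) {K : Set V}
    (hK : Conn G K) {a b c ka kb kc : V} (haK : a ∉ K) (hbK : b ∉ K) (hcK : c ∉ K)
    (hab : G.Adj a b) (hac : G.Adj a c) (hbc : G.Adj b c) (hka : ka ∈ K) (hkb : kb ∈ K)
    (hkc : kc ∈ K) (haka : G.Adj a ka) (hbkb : G.Adj b kb) (hckc : G.Adj c kc) : False := by
  have main : ∀ a b kb z : V, a ∉ K → b ∉ K → G.Adj a b → G.Adj a c → G.Adj b c → kb ∈ K →
      G.Adj b kb → z ∈ K → G.Adj a z →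
      (within G {v | v = z ∨ (v ∈ K ∧ ¬ G.Adj b v)}).Reachable z kc → False := by
    intro a b kb z haK hbK hab hac hbc hkb hbkb hz haz hzr
    obtain ⟨t, htK, hbt, htr⟩ := reach_last (G.Adj b) hkb hbkb (hK kb hkb z hz)
    have hzmem := reach_mem htr (Or.inl rfl)
    have hsub : ∀ s v, (v = t ∨ (v ∈ K ∧ ¬ G.Adj b v)) →
        (v = t ∨ v = s ∨ (v ≠ b ∧ ¬ G.Adj b v)) := by
      rintro s v (h | h)
      · exact Or.inl h
      · exact Or.inr (Or.inr ⟨fun e => hbK (e ▸ h.1), h.2⟩)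
    refine not_linked_three ho hbt hab.symm hbc (fun e => haK (e ▸ htK)) (fun e => hcK (e ▸ htK))
      hac.ne ?_ ?_ ?_
    · refine (reach_mono (hsub a) htr).trans (reach_adj haz.symm (hsub a z hzmem) ?_)
      exact Or.inr (Or.inl rfl)
    · have h1 : (within G {v | v = t ∨ (v ∈ K ∧ ¬ G.Adj b v)}).Reachable t kc := by
        refine htr.trans (reach_mono ?_ hzr)
        rintro v (h | h)
        · subst h; exact hzmem
        · exact Or.inr h
      have hkc' := reach_mem h1 (Or.inl rfl)
      refine (reach_mono (hsub c) h1).trans (reach_adj hckc.symm (hsub c kc hkc') ?_)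
      exact Or.inr (Or.inl rfl)
    · exact reach_adj hac (Or.inl rfl) (Or.inr (Or.inl rfl))
  obtain ⟨z, hzK, hz, hzr⟩ := reach_last (fun v => G.Adj a v ∨ G.Adj b v) hka (Or.inl haka)
    (hK ka hka kc hkc)
  rcases hz with hz | hz
  · refine main a b kb z haK hbK hab hac hbc hkb hbkb hzK hz (reach_mono ?_ hzr)
    rintro v (h | h)
    · exact Or.inl h
    · exact Or.inr ⟨h.1, fun e => h.2 (Or.inr e)⟩
  · refine main b a ka z hbK haK hab.symm hbc hac hka haka hzK hz (reach_mono ?_ hzr)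
    rintro v (h | h)
    · exact Or.inl h
    · exact Or.inr ⟨h.1, fun e => h.2 (Or.inl e)⟩

/-- Every connected set off `S` is attached to `S` within a single vertex or edge. -/
def EdgeAttached (G : SimpleGraph V) (S : Set V) : Prop :=
  ∀ K : Set V, Conn G K → Disjoint K S → ∃ x ∈ S, ∃ y ∈ S, (x = y ∨ G.Adj x y) ∧
    ∀ k ∈ K, ∀ s ∈ S, G.Adj k s → s = x ∨ s = y

lemma CycSet.edgeAttached {G : SimpleGraph V} {o : G.Orientation} (ho : IsCO o) {C : Set V}
    (hC : CycSet G C) : EdgeAttached G C := by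
  intro K hK hd
  have hKC : ∀ a ∈ C, a ∉ K := fun a h1 h2 => Set.disjoint_left.1 hd h2 h1
  by_cases h0 : ∃ x ∈ C, ∃ k ∈ K, G.Adj x k
  · obtain ⟨x, hx, k, hk, hxk⟩ := h0
    by_cases h1 : ∃ y ∈ C, y ≠ x ∧ ∃ k ∈ K, G.Adj y k
    · obtain ⟨y, hy, hyx, k', hk', hyk⟩ := h1
      have hxy := attach_adj ho hC hK hd hx hy hyx.symm hk hk' hxk hyk
      refine ⟨x, hx, y, hy, Or.inr hxy, fun m hm s hs hms => ?_⟩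
      by_contra! hcon
      have h2 := attach_adj ho hC hK hd hx hs hcon.1.symm hk hm hxk hms.symm
      have h3 := attach_adj ho hC hK hd hy hs hcon.2.symm hk' hm hyk hms.symm
      exact no_triangle_attach ho hK (hKC x hx) (hKC y hy) (hKC s hs) hxy h2 h3 hk hk' hm hxk hyk
        hms.symm
    · refine ⟨x, hx, x, hx, Or.inl rfl, fun m hm s hs hms => ?_⟩
      by_contra! hcon
      exact h1 ⟨s, hs, hcon.1, m, hm, hms.symm⟩
  · obtain ⟨x, hx⟩ := hC.nonempty
    exact ⟨x, hx, x, hx, Or.inl rfl, fun m hm s hs hms => absurd ⟨s, hs, m, hm, hms.symm⟩ h0⟩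

/-! ### Growing the vertex set ear by ear -/

/-- Let `K` be a component of `G - S`. By two-connectedness it is attached to exactly the two ends
of an edge `x y` of `S`; a chordless cycle `C` through that edge and `K` is then the only new
chordless cycle in `S ∪ C`, and `S ∪ C` has at least one new vertex. -/
lemma grow {G : SimpleGraph V} [Finite V] {o : G.Orientation} (ho : IsCO o)
    (h2 : G.IsTwoConnected) {S : Set V} (hS : EdgeAttached G S)
    (hS2 : ∀ z, ∃ s ∈ S, s ≠ z) (hne : S ≠ Set.univ) :
    ∃ S' : Set V, S ⊂ S' ∧ EdgeAttached G S' ∧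
      {A | CycSet G A ∧ A ⊆ S'}.ncard ≤ {A | CycSet G A ∧ A ⊆ S}.ncard + 1 := by
  obtain ⟨k0, hk0⟩ := (Set.ne_univ_iff_exists_notMem S).1 hne
  set K : Set V := {v | (within G Sᶜ).Reachable k0 v} with hKdef
  have hKconn : Conn G K := conn_component k0
  have hk0K : k0 ∈ K := Reachable.refl _
  have hKS : ∀ k ∈ K, k ∉ S := fun k hk => reach_mem (A := Sᶜ) hk hk0
  have hKcl : ∀ k ∈ K, ∀ w, G.Adj k w → w ∉ S → w ∈ K := fun k hk w hkw hw =>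
    Reachable.trans hk (reach_adj hkw (hKS k hk) hw)
  obtain ⟨x, hx, y, hy, hxy, hatt⟩ := hS K hKconn (Set.disjoint_left.2 hKS)
  -- `K` is attached to at least two vertices, since no vertex separates it from `S`.
  have hatt2 : ∀ z, ∃ k ∈ K, ∃ s ∈ S, s ≠ z ∧ G.Adj k s := by
    intro z
    by_contra! hcon
    obtain ⟨s0, hs0, hs0z⟩ := hS2 z
    by_cases hz : z ∈ S
    · have hr := (h2.2 z).preconnected ⟨k0, fun h => hk0 (h ▸ hz)⟩ ⟨s0, hs0z⟩
      have : (⟨s0, hs0z⟩ : {w : V | w ≠ z}) ∈ {v : {w : V | w ≠ z} | v.1 ∈ K} := by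
        refine reach_closed ?_ hr hk0K
        intro a b hab ha
        refine hKcl a.1 ha b.1 hab fun hb => ?_
        exact hcon a.1 ha b.1 hb b.2 hab
      exact hKS s0 this hs0
    · have : s0 ∈ K := by
        refine reach_closed ?_ (h2.1.preconnected k0 s0) hk0K
        intro a b hab ha
        refine hKcl a ha b hab fun hb => ?_
        exact hcon a ha b hb (fun h => hz (h ▸ hb)) hab
      exact hKS s0 this hs0
  obtain ⟨ky, hky, s, hs, hsx, hkys⟩ := hatt2 x
  obtain rfl : s = y := (hatt ky hky s hs hkys).resolve_left hsx
  obtain ⟨kx, hkx, t, ht, hty, hkxt⟩ := hatt2 s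
  obtain rfl : t = x := (hatt kx hkx t ht hkxt).resolve_right hty
  rename' t => x, s => y
  have hadj : G.Adj x y := hxy.resolve_left (fun h => hsx h.symm)
  -- The chordless cycle through the edge `x y` and `K`.
  set B : Set V := {v | v = x ∨ v = y ∨ v ∈ K} with hB
  have hle : within G K ≤ cutEdge G B x y := by
    intro a b hab
    refine ⟨hab.1, Or.inr (Or.inr hab.2.1), Or.inr (Or.inr hab.2.2), fun he => ?_⟩
    rcases Sym2.eq_iff.1 he with ⟨h1, -⟩ | ⟨h1, -⟩
    · exact hKS a hab.2.1 (h1 ▸ hx)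
    · exact hKS a hab.2.1 (h1 ▸ hy)
  have hedge : ∀ k ∈ K, ∀ z ∈ S, z ∈ B → G.Adj k z → (cutEdge G B x y).Adj k z := by
    intro k hk z hz hzB hkz
    refine ⟨hkz, Or.inr (Or.inr hk), hzB, fun he => ?_⟩
    rcases Sym2.eq_iff.1 he with ⟨h1, -⟩ | ⟨h1, -⟩
    · exact hKS k hk (h1 ▸ hx)
    · exact hKS k hk (h1 ▸ hy)
  have hr : (cutEdge G B x y).Reachable y x :=
    (SimpleGraph.Adj.reachable (hedge ky hky y hy (Or.inr (Or.inl rfl)) hkys)).symm.trans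
      (((hKconn ky hky kx hkx).mono hle).trans
        (SimpleGraph.Adj.reachable (hedge kx hkx x hx (Or.inl rfl) hkxt)))
  obtain ⟨c, hc, hcB, hyc, -, -⟩ := exists_chordless hadj (Or.inl rfl) hr
  set C : Set V := {w | w ∈ c.support} with hCdef
  have hxC : x ∈ C := c.start_mem_support
  have hyC : y ∈ C := hyc
  have hC : CycSet G C := cycSet_of_chordless hc
  have hCK : ∀ v ∈ C, v ∉ S → v ∈ K := by
    intro v hv hvS
    rcases hcB v hv with rfl | rfl | h
    · exact absurd hx hvS
    · exact absurd hy hvS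
    · exact h
  refine ⟨S ∪ C, ?_, ?_, ?_⟩
  · refine ⟨Set.subset_union_left, fun hsub => ?_⟩
    obtain ⟨z, hz, hzx, hzy⟩ := hC.exists_ne x y
    rcases hcB z hz with h | h | h
    · exact hzx h
    · exact hzy h
    · exact hKS z h (hsub (Or.inr hz))
  · intro K' hK' hd
    have hK'S : ∀ k ∈ K', k ∉ S := fun k hk h => Set.disjoint_left.1 hd hk (Or.inl h)
    by_cases hmeet : ∃ k ∈ K', k ∈ K
    · obtain ⟨k1, hk1, hk1K⟩ := hmeet
      have hsub : ∀ k ∈ K', k ∈ K := fun k hk =>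
        reach_closed (G := within G K') (fun a b hab ha => hKcl a ha b hab.1 (hK'S b hab.2.2))
          (hK' k1 hk1 k hk) hk1K
      obtain ⟨x', hx', y', hy', hxy', hatt'⟩ := hC.edgeAttached ho K' hK'
        (Set.disjoint_left.2 fun k hk h => Set.disjoint_left.1 hd hk (Or.inr h))
      refine ⟨x', Or.inr hx', y', Or.inr hy', hxy', fun k hk s hs hks => hatt' k hk s ?_ hks⟩
      rcases hs with hs | hs
      · rcases hatt k (hsub k hk) s hs hks with rfl | rfl
        · exact hxC
        · exact hyC
      · exact hs
    · obtain ⟨x', hx', y', hy', hxy', hatt'⟩ := hS K' hK' (Set.disjoint_left.2 hK'S)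
      refine ⟨x', Or.inl hx', y', Or.inl hy', hxy', fun k hk s hs hks => hatt' k hk s ?_ hks⟩
      by_contra hsS
      have hsK := hCK s (hs.resolve_left hsS) hsS
      exact hmeet ⟨k, hk, hKcl s hsK k hks.symm (hK'S k hk)⟩
  · have hsub : {A | CycSet G A ∧ A ⊆ S ∪ C} ⊆ insert C {A | CycSet G A ∧ A ⊆ S} := by
      rintro A ⟨hA, hAS⟩
      by_cases hAS' : A ⊆ S
      · exact Or.inr ⟨hA, hAS'⟩
      left
      obtain ⟨p, hp, hpS⟩ := Set.not_subset.1 hAS'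
      have hpK := hCK p ((hAS hp).resolve_left hpS) hpS
      refine hA.eq_of_subset hC fun s hs => ?_
      -- A vertex of `A` off `C` would be cut off from `p` by the edge `x y`.
      by_contra hsC
      have hsS := (hAS hs).resolve_right hsC
      have hr := hA.conn_sdiff x y hadj p
        ⟨hp, by rintro (rfl | rfl) <;> contradiction⟩ s
        ⟨hs, by rintro (rfl | rfl) <;> contradiction⟩
      refine hKS s (reach_closed (G := within G (A \ {x, y})) (T := K) ?_ hr hpK) hsS
      intro a b hab ha
      refine hKcl a ha b hab.1 fun hb => hab.2.2.2 ?_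
      exact hatt a ha b hb hab.1
    exact (Set.ncard_le_ncard hsub (Set.toFinite _)).trans (Set.ncard_insert_le _ _)

/-- The counting bound for vertex sets of chordless cycles. -/
lemma cycSet_count [Finite V] {G : SimpleGraph V} {o : G.Orientation} (ho : IsCO o)
    (h2 : G.IsTwoConnected) {a b : V} (hab : G.Adj a b) :
    {A | CycSet G A}.ncard + 2 ≤ Nat.card V := by
  let P : Set V → Prop := fun S =>
    EdgeAttached G S ∧ {a, b} ⊆ S ∧ {A | CycSet G A ∧ A ⊆ S}.ncard + 2 ≤ S.ncard
  have h0 : P {a, b} := by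
    refine ⟨?_, subset_rfl, ?_⟩
    · exact fun K _ _ => ⟨a, by simp, b, by simp, Or.inr hab, fun k _ s hs _ => by simpa using hs⟩
    · have : {A | CycSet G A ∧ A ⊆ {a, b}} = ∅ := by
        ext A
        simp only [Set.mem_ofPred_eq, Set.mem_empty_iff_false, iff_false, not_and]
        intro hA hsub
        obtain ⟨z, hz, h1, h2⟩ := hA.exists_ne a b
        rcases hsub hz with h | h
        · exact h1 h
        · exact h2 h
      rw [this, Set.ncard_empty, Set.ncard_pair hab.ne]
  obtain ⟨S, hPS, hmax⟩ := Set.Finite.exists_maximal (Set.toFinite {S | P S}) ⟨_, h0⟩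
  have huniv : S = Set.univ := by
    by_contra hne
    have hS2 : ∀ z, ∃ s ∈ S, s ≠ z := by
      intro z
      by_cases h : a = z
      · exact ⟨b, hPS.2.1 (by simp), fun e => hab.ne (h.trans e.symm)⟩
      · exact ⟨a, hPS.2.1 (by simp), h⟩
    obtain ⟨S', hlt, hE, hcard⟩ := grow ho h2 hPS.1 hS2 hne
    have hcard' := Set.ncard_lt_ncard hlt (Set.toFinite _)
    have hPS' : P S' := ⟨hE, hPS.2.1.trans hlt.1, by have := hPS.2.2; omega⟩
    exact hlt.2 (hmax hPS' hlt.1)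
  have h3 := hPS.2.2
  rw [huniv, Set.ncard_univ] at h3
  simpa using h3

/-- A chordless cycle, as a subgraph, is determined by its vertex set. -/
lemma chordless_toSubgraph_adj {G : SimpleGraph V} {v : V} {c : G.Walk v v}
    (hc : c.IsChordlessCycle) (a b : V) :
    c.toSubgraph.Adj a b ↔ G.Adj a b ∧ a ∈ c.toSubgraph.verts ∧ b ∈ c.toSubgraph.verts := by
  refine ⟨fun h => ⟨h.adj_sub, h.fst_mem, h.snd_mem⟩, fun ⟨h, ha, hb⟩ => ?_⟩
  rw [Walk.verts_toSubgraph] at ha hb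
  rw [← Subgraph.mem_edgeSet, Walk.mem_edges_toSubgraph]
  exact hc.2 a b ha hb h

/-- A two-connected cyclically orientable finite simple graph with
`n ≥ 3` vertices has at most `n - 2` chordless cycles (counted up to equality of
the underlying subgraph, i.e. of vertex and edge sets). -/
theorem twoConnected_co_chordlessCycle_count {V : Type*} [Fintype V]
    (G : SimpleGraph V) (h2 : G.IsTwoConnected) (hco : G.CyclicallyOrientable)
    (hn : 3 ≤ Fintype.card V) :
    {H : G.Subgraph | ∃ (v : V) (c : G.Walk v v),
      c.IsChordlessCycle ∧ c.toSubgraph = H}.ncard ≤ Fintype.card V - 2 := by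
  obtain ⟨o, ho⟩ := hco
  have : Nontrivial V := Fintype.one_lt_card_iff_nontrivial.1 (by omega)
  obtain ⟨a⟩ := h2.1.nonempty
  obtain ⟨b, hab⟩ := h2.1.preconnected.exists_adj_of_nontrivial a
  have hcount := cycSet_count (o := o) ho h2 hab
  rw [Nat.card_eq_fintype_card] at hcount
  refine le_trans ?_ (Nat.le_sub_of_add_le hcount)
  refine Set.ncard_le_ncard_of_injOn (fun H => H.verts) ?_ ?_ (Set.toFinite _)
  · rintro H ⟨v, c, hc, rfl⟩
    simp only [Walk.verts_toSubgraph]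
    exact cycSet_of_chordless hc
  · rintro H ⟨v, c, hc, rfl⟩ H' ⟨v', c', hc', rfl⟩ hverts
    simp only at hverts
    refine Subgraph.ext hverts ?_
    ext s t
    rw [chordless_toSubgraph_adj hc, chordless_toSubgraph_adj hc', hverts]
end

section
/- Let G be a cyclically orientable finite simple graph with n vertices, where n ≥ 2. Then the number of chordless cycles of G is at most n − 2; in particular, the number of chordless cycles of a cyclically orientable graph is polynomial in the number of vertices. -/
/-!
A chordless cycle is an induced subgraph, so it suffices to count the vertex sets of chordless
cycles (`COCount.Hole`). Fix an orientation in which all of them are cyclic.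

The key fact is `COCount.Hole.attachments`: a connected set `K` disjoint from a chordless cycle
`C` has all its neighbours on `C` among the two ends of one edge of `C`. Otherwise take a minimal
counterexample `K` and delete from it a vertex `p` that is not a cut vertex. By minimality some
neighbour `a ∈ C` of `K` is lost, so `p` is the only neighbour of `a` in `K`. Let `r, s` be the
neighbours of `a` on `C`. The set `K ∪ (C \ {a, s})` is connected, because `K` has a neighbour on
`C` outside the edge `as`, and its only neighbours of `a` are `p` and `r`; closing up a shortest
path between these through `a` gives a chordless cycle through `p, a, r`. In the same way there is
one through `p, a, s`, and `C` itself passes through `r, a, s`. On each of these three cycles one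
edge enters `a` and the other leaves it, which is impossible for the three edges `pa, ra, sa`.

Since a chordless cycle cannot cross a separating edge, any vertex set `W` that is neither a
chordless cycle nor free of them splits along an edge of a chordless cycle, and an induction in the
style of Dirac's theorem on simplicial vertices (`COCount.exists_simple_vertex`) produces a vertex
of `W` lying on at most one chordless cycle inside `W`. Deleting such vertices one at a time until
two remain bounds the number of chordless cycles by `n - 2` (`COCount.ncard_holes_le`).
-/

open SimpleGraph

variable {V : Type*}

namespace COCount

/-- A vertex set is connected in `G` if it has no nonempty proper subset closed under adjacency
inside it. The empty set counts as connected. -/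
def ConnSet (G : SimpleGraph V) (T : Set V) : Prop :=
  ∀ U ⊆ T, U.Nonempty → (∀ u ∈ U, ∀ t ∈ T, G.Adj u t → t ∈ U) → T ⊆ U

/-- `S` is the vertex set of a chordless cycle of `G`. -/
def Hole (G : SimpleGraph V) (S : Set V) : Prop :=
  ∃ (v : V) (c : G.Walk v v), c.IsChordlessCycle ∧ S = {x | x ∈ c.support}

variable {G : SimpleGraph V}

/-! ### Connected vertex sets -/

lemma ConnSet.subset_of_closed {T X U : Set V} (hT : ConnSet G T) (hTX : T ⊆ X)
    (hU : ∀ u ∈ U, ∀ t ∈ X, G.Adj u t → t ∈ U) {x : V} (hxT : x ∈ T) (hxU : x ∈ U) : T ⊆ U := by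
  have := hT (U ∩ T) Set.inter_subset_right ⟨x, hxU, hxT⟩
    (fun u hu t ht h => ⟨hU u hu.1 t (hTX ht) h, ht⟩)
  exact fun y hy => (this hy).1

lemma connSet_singleton (v : V) : ConnSet G {v} := by
  rintro U hU ⟨u, hu⟩ _ x rfl
  have := hU hu
  simp_all

lemma ConnSet.union {K L : Set V} (hK : ConnSet G K) (hL : ConnSet G L) {k l : V} (hk : k ∈ K)
    (hl : l ∈ L) (h : G.Adj k l) : ConnSet G (K ∪ L) := by
  rintro U hU ⟨u, hu⟩ hcl
  have hKU : ∀ x ∈ K, x ∈ U → K ⊆ U := fun x => hK.subset_of_closed Set.subset_union_left hcl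
  have hLU : ∀ x ∈ L, x ∈ U → L ⊆ U := fun x => hL.subset_of_closed Set.subset_union_right hcl
  rcases hU hu with h' | h'
  · have h1 := hKU u h' hu
    exact Set.union_subset h1 (hLU l hl (hcl k (h1 hk) l (Or.inr hl) h))
  · have h1 := hLU u h' hu
    exact Set.union_subset (hKU k hk (hcl l (h1 hl) k (Or.inl hk) h.symm)) h1

lemma ConnSet.insert {K : Set V} (hK : ConnSet G K) {k v : V} (hk : k ∈ K) (h : G.Adj k v) :
    ConnSet G (insert v K) := by
  have := hK.union (connSet_singleton v) hk rfl h
  rwa [Set.union_singleton] at this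

lemma connSet_support {u v : V} (w : G.Walk u v) : ConnSet G {x | x ∈ w.support} := by
  induction w with
  | nil => simpa using connSet_singleton _
  | cons h p ih =>
    have := ih.insert (k := _) p.start_mem_support h.symm
    convert this using 1
    ext x
    simp

/-- A nonempty finite connected set has a vertex whose deletion leaves it connected. -/
lemma ConnSet.exists_diff_singleton [Finite V] {K : Set V} (hK : ConnSet G K) (hne : K.Nonempty) :
    ∃ p ∈ K, ConnSet G (K \ {p}) := by
  -- A maximal proper connected subset misses exactly one vertex.
  obtain ⟨L, -, hL⟩ := (Set.toFinite {L : Set V | ConnSet G L ∧ L ⊂ K}).exists_le_maximal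
    (a := ∅) ⟨fun U _ _ _ => Set.empty_subset _,
      by simpa [Set.ssubset_iff_subset_ne] using hne.ne_empty.symm⟩
  obtain ⟨⟨hLc, hLK⟩, hmax⟩ := hL
  have key : ∃ p ∈ K, p ∉ L ∧ ConnSet G (Insert.insert p L) := by
    rcases L.eq_empty_or_nonempty with rfl | hLne
    · obtain ⟨p, hp⟩ := hne
      exact ⟨p, hp, by simp, by simpa using connSet_singleton p⟩
    · by_contra! hcon
      refine hLK.2 (hK L hLK.1 hLne fun u hu t ht h => ?_)
      by_contra htL
      exact hcon t ht htL (hLc.insert hu h)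
  obtain ⟨p, hpK, hpL, hc⟩ := key
  refine ⟨p, hpK, ?_⟩
  have hsub : Insert.insert p L ⊆ K := Set.insert_subset hpK hLK.1
  have : Insert.insert p L = K := by
    by_contra hne'
    exact hpL (hmax ⟨hc, hsub.ssubset_of_ne hne'⟩ (Set.subset_insert _ _) (Set.mem_insert _ _))
  rw [← this]
  convert hLc using 1
  ext t
  have : t = p → t ∉ L := by rintro rfl; exact hpL
  simp
  tauto

lemma ConnSet.exists_walk {T : Set V} (hT : ConnSet G T) {p q : V} (hp : p ∈ T) (hq : q ∈ T) :
    ∃ w : G.Walk p q, ∀ x ∈ w.support, x ∈ T := by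
  refine (hT {t | t ∈ T ∧ ∃ w : G.Walk p t, ∀ x ∈ w.support, x ∈ T} (fun t ht => ht.1)
    ⟨p, hp, .nil, by simpa using hp⟩ ?_ hq).2
  rintro u ⟨hu, w, hw⟩ t ht h
  refine ⟨ht, w.concat h, fun x hx => ?_⟩
  rw [Walk.support_concat] at hx
  simp at hx
  rcases hx with hx | rfl
  exacts [hw x hx, ht]

/-- A shortest walk inside a connected set is an induced path. -/
lemma ConnSet.exists_induced_path {T : Set V} (hT : ConnSet G T) {p q : V} (hp : p ∈ T)
    (hq : q ∈ T) : ∃ w : G.Walk p q, w.IsPath ∧ (∀ x ∈ w.support, x ∈ T) ∧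
      ∀ x ∈ w.support, ∀ y ∈ w.support, G.Adj x y → s(x, y) ∈ w.edges := by
  classical
  have hex : ∃ n, ∃ w : G.Walk p q, (∀ x ∈ w.support, x ∈ T) ∧ w.length = n := by
    obtain ⟨w, hw⟩ := hT.exists_walk hp hq
    exact ⟨_, w, hw, rfl⟩
  obtain ⟨w₀, hw₀, hlen⟩ := Nat.find_spec hex
  have hmin : ∀ w : G.Walk p q, (∀ x ∈ w.support, x ∈ T) → w₀.bypass.length ≤ w.length := by
    intro w hw
    have := Nat.find_min' hex ⟨w, hw, rfl⟩
    have := w₀.length_bypass_le_length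
    omega
  have hsup : ∀ x ∈ w₀.bypass.support, x ∈ T := fun x hx => hw₀ x (w₀.support_bypass_subset_support hx)
  have hpath : w₀.bypass.IsPath := w₀.bypass_isPath
  generalize w₀.bypass = w at hmin hsup hpath
  refine ⟨w, hpath, hsup, ?_⟩
  have key : ∀ i j, i < j → j ≤ w.length → G.Adj (w.getVert i) (w.getVert j) →
      s(w.getVert i, w.getVert j) ∈ w.edges := by
    intro i j hij hj h
    have hlen := hmin ((w.take i).append (.cons h (w.drop j))) (by
      intro x hx
      apply hsup
      rw [Walk.mem_support_append_iff, Walk.support_cons, List.mem_cons] at hx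
      rcases hx with hx | rfl | hx
      · exact (w.isSubwalk_take i).support_subset hx
      · exact w.getVert_mem_support _
      · exact (w.isSubwalk_drop j).support_subset hx)
    simp only [Walk.length_append, Walk.length_cons, Walk.take_length, Walk.drop_length] at hlen
    obtain rfl : j = i + 1 := by omega
    exact Walk.adj_toSubgraph_iff_mem_edges.1 (w.toSubgraph_adj_getVert (by omega))
  intro x hx y hy h
  obtain ⟨i, rfl, hi⟩ := Walk.mem_support_iff_exists_getVert.1 hx
  obtain ⟨j, rfl, hj⟩ := Walk.mem_support_iff_exists_getVert.1 hy
  rcases lt_trichotomy i j with hij | rfl | hij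
  · exact key i j hij hj h
  · exact (G.irrefl h).elim
  · rw [Sym2.eq_swap]
    exact key j i hij hi h.symm

/-! ### Chordless cycles as vertex sets -/

/-- If `p, q` are the only neighbours of `a` in a connected set, then some chordless cycle
passes through `p, a, q`. -/
lemma ConnSet.exists_hole {T : Set V} (hT : ConnSet G T) {a p q : V} (ha : a ∉ T) (hp : p ∈ T)
    (hq : q ∈ T) (hpq : p ≠ q) (hap : G.Adj a p) (haq : G.Adj a q)
    (hn : ∀ t ∈ T, G.Adj a t → t = p ∨ t = q) :
    ∃ S, Hole G S ∧ a ∈ S ∧ p ∈ S ∧ q ∈ S := by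
  obtain ⟨w, hw, hsup, hind⟩ := hT.exists_induced_path hp hq
  have haw : a ∉ w.support := fun h => ha (hsup a h)
  have hmem : ∀ x, x ∈ (Walk.cons hap (w.concat haq.symm)).support ↔ x = a ∨ x ∈ w.support := by
    intro x
    simp [Walk.support_concat]
    tauto
  have hedge : ∀ e, e ∈ (Walk.cons hap (w.concat haq.symm)).edges ↔
      e = s(a, p) ∨ e ∈ w.edges ∨ e = s(q, a) := by
    intro e
    simp [Walk.edges_concat]
  refine ⟨{x | x ∈ (Walk.cons hap (w.concat haq.symm)).support}, ⟨a, _, ⟨?_, ?_⟩, rfl⟩, ?_, ?_, ?_⟩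
  · rw [Walk.cons_isCycle_iff]
    refine ⟨hw.concat haw _, ?_⟩
    rw [Walk.edges_concat]
    simp only [List.concat_eq_append, List.mem_append, List.mem_singleton, not_or]
    refine ⟨fun h => haw (w.fst_mem_support_of_mem_edges h), ?_⟩
    rw [Sym2.eq_iff]
    rintro (⟨h, -⟩ | ⟨-, h⟩)
    · exact haq.ne h
    · exact hpq h
  · intro x y hx hy h
    rw [hmem] at hx hy
    rw [hedge]
    rcases hx with rfl | hx <;> rcases hy with rfl | hy
    · exact (G.irrefl h).elim
    · rcases hn y (hsup y hy) h with rfl | rfl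
      · exact Or.inl rfl
      · exact Or.inr (Or.inr Sym2.eq_swap)
    · rcases hn x (hsup x hx) h.symm with rfl | rfl
      · exact Or.inl Sym2.eq_swap
      · exact Or.inr (Or.inr rfl)
    · exact Or.inr (Or.inl (hind x hx y hy h))
  · exact (hmem a).2 (Or.inl rfl)
  · exact (hmem p).2 (Or.inr w.start_mem_support)
  · exact (hmem q).2 (Or.inr w.end_mem_support)

/-- The local structure of a chordless cycle `S` at one of its vertices `x`: exactly two
neighbours `y, z` in `S`, the rest of `S` is connected after deleting `x` and either neighbour,
and an orientation making all chordless cycles cyclic enters `x` along exactly one of the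
edges `yx`, `zx`. -/
lemma Hole.local_structure {S : Set V} (hS : Hole G S) {x : V} (hx : x ∈ S) :
    ∃ y z, y ∈ S ∧ z ∈ S ∧ y ≠ z ∧ G.Adj x y ∧ G.Adj x z ∧
      (∀ t ∈ S, G.Adj x t → t = y ∨ t = z) ∧
      ConnSet G (S \ {x, y}) ∧ ConnSet G (S \ {x, z}) ∧
      ∀ o : G.Orientation, (∀ (v : V) (c : G.Walk v v), c.IsChordlessCycle → o.IsCyclicOn c) →
        (o.dir y x ↔ ¬ o.dir z x) := by
  classical
  obtain ⟨v, c₀, ⟨hcyc₀, hch₀⟩, rfl⟩ := hS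
  have hx' : x ∈ c₀.support := hx
  -- The cycle may be taken to start at `x`.
  obtain ⟨c, hcyc, hch, hmem⟩ : ∃ c : G.Walk x x, c.IsCycle ∧
      (∀ u w : V, u ∈ c.support → w ∈ c.support → G.Adj u w → s(u, w) ∈ c.edges) ∧
      ∀ t, t ∈ c.support ↔ t ∈ c₀.support := by
    refine ⟨c₀.rotate x hx', hcyc₀.rotate hx', ?_, fun t => Walk.mem_support_rotate_iff ..⟩
    intro u w hu hw h
    rw [Walk.mem_support_rotate_iff] at hu hw
    exact (c₀.rotate_edges x hx').mem_iff.2 (hch₀ u w hu hw h)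
  have hset : {t | t ∈ c₀.support} = {t | t ∈ c.support} := by ext t; exact (hmem t).symm
  rw [hset]
  clear hmem hset hx hx' hcyc₀ hch₀
  have hchord : c.IsChordlessCycle := ⟨hcyc, hch⟩
  cases c with
  | nil => exact (hcyc.ne_nil rfl).elim
  | @cons _ y _ h p =>
    rw [Walk.cons_isCycle_iff] at hcyc
    obtain ⟨hp, hxy⟩ := hcyc
    -- Write `p` as a path `w` from `y` to `z` followed by the edge `zx`.
    obtain ⟨z, w, h', rfl⟩ : ∃ (z : V) (w : G.Walk y z) (h' : G.Adj z x), p = w.concat h' := by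
      cases p with
      | nil => exact (G.irrefl h).elim
      | cons h₂ q =>
        obtain ⟨z, w, h', e⟩ := Walk.exists_cons_eq_concat h₂ q
        exact ⟨z, w, h', e⟩
    rw [Walk.concat_isPath_iff] at hp
    obtain ⟨hw, hxw⟩ := hp
    have hmem : ∀ t, t ∈ (Walk.cons h (w.concat h')).support ↔ t = x ∨ t ∈ w.support := by
      intro t
      simp [Walk.support_concat]
      tauto
    have hyz : y ≠ z := by
      rintro rfl
      apply hxy
      simp [Walk.edges_concat, Sym2.eq_swap]
    have hconn : ∀ {y z : V} (w : G.Walk y z), w.IsPath → x ∉ w.support → y ≠ z →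
        ConnSet G ({t | t = x ∨ t ∈ w.support} \ {x, y}) := by
      intro y z w hw hxw hyz
      cases w with
      | nil => exact (hyz rfl).elim
      | cons h₃ q =>
        rw [Walk.cons_isPath_iff] at hw
        convert connSet_support q using 1
        ext t
        have h1 : t = x → t ∉ q.support := by
          rintro rfl ht; exact hxw (by simp [ht])
        have h2 : t = y → t ∉ q.support := by
          rintro rfl ht; exact hw.2 ht
        simp
        tauto
    have hSeq : {t | t ∈ (Walk.cons h (w.concat h')).support} = {t | t = x ∨ t ∈ w.support} :=
      Set.ext hmem
    refine ⟨y, z, (hmem y).2 (Or.inr w.start_mem_support), (hmem z).2 (Or.inr w.end_mem_support),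
      hyz, h, h'.symm, ?_, ?_, ?_, ?_⟩
    · intro t ht hxt
      have := hch x t ((hmem x).2 (Or.inl rfl)) ht hxt
      simp only [Walk.edges_cons, Walk.edges_concat, List.concat_eq_append, List.mem_cons,
        List.mem_append, List.not_mem_nil, or_false] at this
      rcases this with e | e | e
      · exact Or.inl (Sym2.congr_right.1 e)
      · exact (hxw (w.fst_mem_support_of_mem_edges e)).elim
      · right
        rw [Sym2.eq_swap (a := z)] at e
        exact Sym2.congr_right.1 e
    · rw [hSeq]; exact hconn w hw hxw hyz
    · rw [hSeq]
      have := hconn w.reverse hw.reverse (by simpa using hxw) hyz.symm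
      simpa using this
    · intro o ho
      have h1 := o.adj_iff_dir _ _ h
      rcases ho x _ hchord with hd | hd
      · have a1 := hd ⟨(x, y), h⟩ (by simp)
        have a2 := hd ⟨(z, x), h'⟩ (by simp [Walk.darts_concat])
        simp at a1 a2
        tauto
      · have a1 := hd ⟨(x, y), h⟩ (by simp)
        have a2 := hd ⟨(z, x), h'⟩ (by simp [Walk.darts_concat])
        have h2 := o.adj_iff_dir _ _ h'
        simp at a1 a2
        tauto

/-- At each vertex of a chordless cycle one of the two cycle edges is incoming and the other
outgoing. -/
lemma Hole.turn {o : G.Orientation}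
    (ho : ∀ (v : V) (c : G.Walk v v), c.IsChordlessCycle → o.IsCyclicOn c)
    {S : Set V} (hS : Hole G S) {a p q : V} (ha : a ∈ S) (hp : p ∈ S) (hq : q ∈ S) (hpq : p ≠ q)
    (hap : G.Adj a p) (haq : G.Adj a q) : o.dir p a ↔ ¬ o.dir q a := by
  obtain ⟨y, z, -, -, -, -, -, hn, -, -, hd⟩ := hS.local_structure ha
  have hd := hd o ho
  rcases hn p hp hap with rfl | rfl <;> rcases hn q hq haq with rfl | rfl <;> tauto

lemma Hole.connSet {S : Set V} (hS : Hole G S) : ConnSet G S := by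
  obtain ⟨v, c, -, rfl⟩ := hS
  exact connSet_support c

lemma Hole.connSet_diff_singleton {S : Set V} (hS : Hole G S) {a : V} (ha : a ∈ S) :
    ConnSet G (S \ {a}) := by
  obtain ⟨y, z, hy, hz, hyz, hay, haz, hn, hc, -, -⟩ := hS.local_structure ha
  obtain ⟨y', z', hy', hz', hyz', hay', haz', -⟩ := hS.local_structure hy
  obtain ⟨t, ht, hta, hyt⟩ : ∃ t ∈ S, t ≠ a ∧ G.Adj y t := by
    by_cases h : y' = a
    · exact ⟨z', hz', fun e => hyz' (h.trans e.symm), haz'⟩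
    · exact ⟨y', hy', h, hay'⟩
  have := hc.insert (k := t) ⟨ht, by simp [hta, hyt.ne']⟩ hyt.symm
  convert this using 1
  ext s
  have h1 : s = y → s ∈ S := by rintro rfl; exact hy
  have h2 : s = y → s ≠ a := by rintro rfl; exact hay.ne'
  simp
  tauto

lemma Hole.connSet_diff_pair {S : Set V} (hS : Hole G S) {a b : V} (hab : G.Adj a b) :
    ConnSet G (S \ {a, b}) := by
  by_cases ha : a ∈ S <;> by_cases hb : b ∈ S
  · obtain ⟨y, z, -, -, -, -, -, hn, hy, hz, -⟩ := hS.local_structure ha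
    rcases hn b hb hab with rfl | rfl
    exacts [hy, hz]
  · convert hS.connSet_diff_singleton ha using 1
    ext s
    have : s = b → s ∉ S := by rintro rfl; exact hb
    simp
    tauto
  · convert hS.connSet_diff_singleton hb using 1
    ext s
    have : s = a → s ∉ S := by rintro rfl; exact ha
    simp
    tauto
  · convert hS.connSet using 1
    ext s
    have : s = a → s ∉ S := by rintro rfl; exact ha
    have : s = b → s ∉ S := by rintro rfl; exact hb
    simp
    tauto

lemma Hole.nonempty {S : Set V} (hS : Hole G S) : S.Nonempty := by
  obtain ⟨v, c, -, rfl⟩ := hS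
  exact ⟨v, c.start_mem_support⟩

/-- No chordless cycle is properly contained in another one. -/
lemma Hole.eq_of_subset {S S' : Set V} (hS : Hole G S) (hS' : Hole G S') (h : S ⊆ S') :
    S = S' := by
  refine h.antisymm (hS'.connSet S h hS.nonempty ?_)
  intro u hu t ht hut
  obtain ⟨y, z, hy, hz, hyz, huy, huz, -⟩ := hS.local_structure hu
  obtain ⟨y', z', -, -, -, -, -, hn, -⟩ := hS'.local_structure (h hu)
  rcases hn y (h hy) huy with rfl | rfl <;> rcases hn z (h hz) huz with rfl | rfl <;>
    rcases hn t ht hut with rfl | rfl <;> tauto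

/-- A chordless cycle does not cross a separating edge `ab`. -/
lemma Hole.subset_of_separator {S K W : Set V} (hS : Hole G S) (hSW : S ⊆ W) {a b : V}
    (hab : G.Adj a b) (hK : ∀ k ∈ K, ∀ t ∈ W, G.Adj k t → t ∈ K ∨ t = a ∨ t = b) {x : V}
    (hxS : x ∈ S) (hxK : x ∈ K) (hxa : x ≠ a) (hxb : x ≠ b) : S ⊆ K ∪ {a, b} := by
  have := (hS.connSet_diff_pair hab).subset_of_closed (U := K) subset_rfl (by
    rintro u hu t ⟨htS, ht⟩ h
    simp at ht
    have := hK u hu t (hSW htS) h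
    tauto) (x := x) ⟨hxS, by simp [hxa, hxb]⟩ hxK
  intro t ht
  by_cases h : t ∈ ({a, b} : Set V)
  · exact Or.inr h
  · exact Or.inl (this ⟨ht, h⟩)

/-! ### Attachments to a chordless cycle -/

/-- In a cyclically oriented graph, a connected set disjoint from a chordless cycle `C` is
attached to `C` only at the ends of a single edge of `C`. -/
lemma Hole.attachments [Finite V] {o : G.Orientation}
    (ho : ∀ (v : V) (c : G.Walk v v), c.IsChordlessCycle → o.IsCyclicOn c)
    {C K : Set V} (hC : Hole G C) (hK : ConnSet G K) (hKC : ∀ k ∈ K, k ∉ C) :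
    ∃ x ∈ C, ∃ y ∈ C, G.Adj x y ∧ ∀ k ∈ K, ∀ c ∈ C, G.Adj k c → c = x ∨ c = y := by
  by_contra hbad
  -- Pass to a minimal counterexample `L`.
  obtain ⟨L, -, ⟨hL, hLC, hLbad⟩, hmin⟩ := (Set.toFinite {K : Set V | ConnSet G K ∧
    (∀ k ∈ K, k ∉ C) ∧ ¬ ∃ x ∈ C, ∃ y ∈ C, G.Adj x y ∧
      ∀ k ∈ K, ∀ c ∈ C, G.Adj k c → c = x ∨ c = y}).exists_le_minimal (a := K) ⟨hK, hKC, hbad⟩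
  have hne : L.Nonempty := by
    by_contra hL0
    rw [Set.not_nonempty_iff_eq_empty] at hL0
    subst hL0
    obtain ⟨x, hx⟩ := hC.nonempty
    obtain ⟨y, -, hy, -, -, hxy, -⟩ := hC.local_structure hx
    exact hLbad ⟨x, hx, y, hy, hxy, by simp⟩
  obtain ⟨p, hp, hLp⟩ := hL.exists_diff_singleton hne
  obtain ⟨x, hx, y, hy, hxy, hsub⟩ : ∃ x ∈ C, ∃ y ∈ C, G.Adj x y ∧
      ∀ k ∈ L \ {p}, ∀ c ∈ C, G.Adj k c → c = x ∨ c = y := by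
    by_contra h
    exact (hmin ⟨hLp, fun k hk => hLC k hk.1, h⟩ Set.sdiff_subset hp).2 rfl
  -- An attachment `a` lost by deleting `p` has `p` as its only neighbour in `L`.
  obtain ⟨k, hk, a, ha, hka, hax, hay⟩ : ∃ k ∈ L, ∃ a ∈ C, G.Adj k a ∧ a ≠ x ∧ a ≠ y := by
    by_contra! h
    exact hLbad ⟨x, hx, y, hy, hxy, fun k hk c hc hkc => or_iff_not_imp_left.2 (h k hk c hc hkc)⟩
  have huniq : ∀ t ∈ L, G.Adj a t → t = p := by
    intro t ht hat
    by_contra htp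
    rcases hsub t ⟨ht, htp⟩ a ha hat.symm with h | h <;> contradiction
  obtain rfl := huniq k hk hka.symm
  obtain ⟨s, r, hs, hr, hsr, has, har, hn, hcs, hcr, -⟩ := hC.local_structure ha
  -- For each of the two neighbours of `a` on `C`, a chordless cycle uses it together with `ak`.
  have key : ∀ s r, s ∈ C → r ∈ C → s ≠ r → G.Adj a s → G.Adj a r →
      (∀ t ∈ C, G.Adj a t → t = s ∨ t = r) → ConnSet G (C \ {a, s}) →
      (o.dir k a ↔ ¬ o.dir r a) := by
    intro s r hs hr hsr has har hn hcs
    obtain ⟨l, hl, c, hc, hlc, hca, hcs'⟩ : ∃ l ∈ L, ∃ c ∈ C, G.Adj l c ∧ c ≠ a ∧ c ≠ s := by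
      by_contra! h
      exact hLbad ⟨a, ha, s, hs, has,
        fun k hk c hc hkc => or_iff_not_imp_left.2 (h k hk c hc hkc)⟩
    have hkr : k ≠ r := by rintro rfl; exact hLC _ hk hr
    obtain ⟨S, hS, haS, hkS, hrS⟩ := (hL.union hcs hl ⟨hc, by simp [hca, hcs']⟩ hlc).exists_hole
      (a := a) (p := k) (q := r) (by
        rintro (h | h)
        · exact hLC a h ha
        · simp at h) (Or.inl hk) (Or.inr ⟨hr, by simp [har.ne', hsr.symm]⟩) hkr hka.symm har (by
        rintro t (ht | ⟨ht, ht'⟩) hat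
        · exact Or.inl (huniq t ht hat)
        · simp at ht'
          have := hn t ht hat
          tauto)
    exact hS.turn ho haS hkS hrS hkr hka.symm har
  have h1 := key s r hs hr hsr has har hn hcs
  have h2 := key r s hr hs hsr.symm har has (fun t ht h => (hn t ht h).symm) hcr
  have h3 := hC.turn ho ha hs hr hsr has har
  tauto

/-! ### A vertex on at most one chordless cycle -/

/-- Every vertex set `W` not inside `{x, y}`, where `x = y` or `xy` is an edge, has a vertex
other than `x, y` on at most one chordless cycle inside `W`. Excluding the ends of an edge makes
the induction work when `W` is split along an edge of a chordless cycle. -/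
lemma exists_simple_vertex [Finite V] {o : G.Orientation}
    (ho : ∀ (v : V) (c : G.Walk v v), c.IsChordlessCycle → o.IsCyclicOn c) (W : Set V) :
    ∀ x y : V, (x = y ∨ G.Adj x y) → (∃ v ∈ W, v ≠ x ∧ v ≠ y) →
      ∃ v ∈ W, v ≠ x ∧ v ≠ y ∧ ∀ S S', Hole G S → Hole G S' → S ⊆ W → S' ⊆ W →
        v ∈ S → v ∈ S' → S = S' := by
  induction W using WellFoundedLT.induction with
  | ind W ih =>
  rintro x y hxy ⟨v₀, hv₀, hv₀x, hv₀y⟩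
  by_cases hC : ∃ C, Hole G C ∧ C ⊆ W
  swap
  · exact ⟨v₀, hv₀, hv₀x, hv₀y, fun S _ hS _ hSW => (hC ⟨S, hS, hSW⟩).elim⟩
  obtain ⟨C, hC, hCW⟩ := hC
  by_cases hWC : W ⊆ C
  · refine ⟨v₀, hv₀, hv₀x, hv₀y, fun S S' hS hS' hSW hSW' _ _ => ?_⟩
    rw [hS.eq_of_subset hC (hSW.trans hWC), hS'.eq_of_subset hC (hSW'.trans hWC)]
  obtain ⟨t₀, ht₀W, ht₀C⟩ := Set.not_subset.1 hWC
  -- `K` is a connected component of `W \ C`.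
  obtain ⟨K, ht₀K, ⟨hK, hKW⟩, hmax⟩ :=
    (Set.toFinite {K : Set V | ConnSet G K ∧ K ⊆ W \ C}).exists_le_maximal (a := {t₀})
      ⟨connSet_singleton t₀, by simp [ht₀W, ht₀C]⟩
  have ht₀K : t₀ ∈ K := ht₀K rfl
  obtain ⟨a, ha, b, hb, hab, hatt⟩ := hC.attachments ho hK fun k hk => (hKW hk).2
  have hKab : ∀ k ∈ K, k ≠ a ∧ k ≠ b := by
    refine fun k hk => ⟨?_, ?_⟩ <;> rintro rfl
    exacts [(hKW hk).2 ha, (hKW hk).2 hb]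
  have hKcl : ∀ k ∈ K, ∀ t ∈ W, G.Adj k t → t ∈ K ∨ t = a ∨ t = b := by
    intro k hk t ht hkt
    by_cases htC : t ∈ C
    · exact Or.inr (hatt k hk t htC hkt)
    · exact Or.inl (hmax ⟨hK.insert hk hkt, Set.insert_subset ⟨ht, htC⟩ hKW⟩
        (Set.subset_insert _ _) (Set.mem_insert _ _))
  obtain ⟨c, hc, hca, hcb⟩ : ∃ c ∈ C, c ≠ a ∧ c ≠ b := by
    obtain ⟨s, r, hs, hr, hsr, has, har, -⟩ := hC.local_structure ha
    by_cases h : s = b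
    · exact ⟨r, hr, har.ne', fun e => hsr (h.trans e.symm)⟩
    · exact ⟨s, hs, has.ne', h⟩
  have hcK : c ∉ K := fun h => (hKW h).2 hc
  by_cases hxyK : x ∈ K ∨ y ∈ K
  · obtain ⟨v, ⟨hvW, hvK⟩, hva, hvb, hv⟩ := ih (W \ K)
      ⟨Set.sdiff_subset, fun h => (h ht₀W).2 ht₀K⟩ a b (Or.inr hab) ⟨c, ⟨hCW hc, hcK⟩, hca, hcb⟩
    have hsub : ∀ S, Hole G S → S ⊆ W → v ∈ S → S ⊆ W \ K := by
      intro S hS hSW hvS t ht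
      refine ⟨hSW ht, fun htK => ?_⟩
      have := hS.subset_of_separator hSW hab hKcl ht htK (hKab t htK).1 (hKab t htK).2 hvS
      simp at this
      tauto
    refine ⟨v, hvW, ?_, ?_, fun S S' hS hS' hSW hSW' hvS hvS' =>
      hv S S' hS hS' (hsub S hS hSW hvS) (hsub S' hS' hSW' hvS') hvS hvS'⟩
    · rintro rfl
      rcases hxyK with h | h
      · exact hvK h
      · rcases hxy with rfl | hxy
        · exact hvK h
        · have := hKcl _ h _ hvW hxy.symm
          tauto
    · rintro rfl
      rcases hxyK with h | h
      · rcases hxy with rfl | hxy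
        · exact hvK h
        · have := hKcl _ h _ hvW hxy
          tauto
      · exact hvK h
  · push Not at hxyK
    obtain ⟨v, hvW', hva, hvb, hv⟩ := ih (K ∪ {a, b})
      ⟨Set.union_subset (fun k hk => (hKW hk).1)
        (Set.insert_subset (hCW ha) (Set.singleton_subset_iff.2 (hCW hb))),
        fun h => by have := h (hCW hc); simp at this; tauto⟩ a b (Or.inr hab)
        ⟨t₀, Or.inl ht₀K, hKab t₀ ht₀K⟩
    have hvK : v ∈ K := by simp at hvW'; tauto
    refine ⟨v, (hKW hvK).1, ?_, ?_, fun S S' hS hS' hSW hSW' hvS hvS' =>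
      hv S S' hS hS' (hS.subset_of_separator hSW hab hKcl hvS hvK hva hvb)
        (hS'.subset_of_separator hSW' hab hKcl hvS' hvK hva hvb) hvS hvS'⟩
    · rintro rfl; exact hxyK.1 hvK
    · rintro rfl; exact hxyK.2 hvK

/-! ### Counting -/

lemma Hole.three_le_ncard [Finite V] {S : Set V} (hS : Hole G S) : 3 ≤ S.ncard := by
  obtain ⟨x, hx⟩ := hS.nonempty
  obtain ⟨y, z, hy, hz, hyz, hxy, hxz, -⟩ := hS.local_structure hx
  have h3 : ({x, y, z} : Set V).ncard = 3 := Set.ncard_eq_three.2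
    ⟨x, y, z, hxy.ne, hxz.ne, hyz, rfl⟩
  rw [← h3]
  exact Set.ncard_le_ncard (by
    rintro t (rfl | rfl | rfl) <;> assumption) (Set.toFinite _)

/-- With truncated subtraction, the bound holds for every vertex set: sets of at most two
vertices contain no cycle. -/
lemma ncard_holes_le [Finite V] {o : G.Orientation}
    (ho : ∀ (v : V) (c : G.Walk v v), c.IsChordlessCycle → o.IsCyclicOn c) (W : Set V) :
    {S | Hole G S ∧ S ⊆ W}.ncard ≤ W.ncard - 2 := by
  induction W using WellFoundedLT.induction with
  | ind W ih =>
  by_cases hW : W.ncard ≤ 2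
  · have : {S | Hole G S ∧ S ⊆ W} = ∅ := by
      ext S
      simp only [Set.mem_ofPred_eq, Set.mem_empty_iff_false, iff_false]
      rintro ⟨hS, hSW⟩
      have := hS.three_le_ncard
      have := Set.ncard_le_ncard hSW (Set.toFinite _)
      omega
    simp [this]
  · push Not at hW
    obtain ⟨x, y, z, hx, hy, hz, hxy, hxz, hyz⟩ := (Set.two_lt_ncard_iff (Set.toFinite W)).1 hW
    obtain ⟨v, hvW, -, -, hv⟩ := exists_simple_vertex ho W x x (Or.inl rfl)
      ⟨y, hy, hxy.symm, hxy.symm⟩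
    have h1 := ih (W \ {v}) ⟨Set.sdiff_subset, fun h => (h hvW).2 rfl⟩
    have h2 : {S | Hole G S ∧ S ⊆ W} ⊆
        {S | Hole G S ∧ S ⊆ W \ {v}} ∪ {S | Hole G S ∧ S ⊆ W ∧ v ∈ S} := by
      rintro S ⟨hS, hSW⟩
      by_cases hvS : v ∈ S
      · exact Or.inr ⟨hS, hSW, hvS⟩
      · exact Or.inl ⟨hS, Set.subset_sdiff_singleton hSW hvS⟩
    have h3 : {S | Hole G S ∧ S ⊆ W ∧ v ∈ S}.ncard ≤ 1 := by
      rw [Set.ncard_le_one (Set.toFinite _)]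
      rintro S ⟨hS, hSW, hvS⟩ S' ⟨hS', hSW', hvS'⟩
      exact hv S S' hS hS' hSW hSW' hvS hvS'
    have h4 := Set.ncard_le_ncard h2 (Set.toFinite _)
    have h5 := Set.ncard_union_le {S | Hole G S ∧ S ⊆ W \ {v}} {S | Hole G S ∧ S ⊆ W ∧ v ∈ S}
    have h6 := Set.ncard_sdiff_singleton_add_one hvW (Set.toFinite W)
    omega

/-- The subgraph of a chordless cycle is induced, hence determined by its vertex set. -/
lemma toSubgraph_eq_induce {v : V} {c : G.Walk v v} (hc : c.IsChordlessCycle) :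
    c.toSubgraph = (⊤ : G.Subgraph).induce {x | x ∈ c.support} := by
  refine le_antisymm c.toSubgraph_le_induce_support ⟨?_, ?_⟩
  · intro x hx
    rwa [Walk.mem_verts_toSubgraph]
  · intro x y h
    rw [Walk.adj_toSubgraph_iff_mem_edges]
    exact hc.2 x y h.1 h.2.1 h.2.2

end COCount

/-- A cyclically orientable finite simple graph with `n ≥ 2`
vertices has at most `n - 2` chordless cycles (counted up to equality of the
underlying subgraph, i.e. of vertex and edge sets); in particular the number of
chordless cycles is polynomial in the number of vertices. -/
theorem co_chordlessCycle_count {V : Type*} [Fintype V] (G : SimpleGraph V)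
    (hco : G.CyclicallyOrientable) (hn : 2 ≤ Fintype.card V) :
    {H : G.Subgraph | ∃ (v : V) (c : G.Walk v v),
      c.IsChordlessCycle ∧ c.toSubgraph = H}.ncard ≤ Fintype.card V - 2 := by
  obtain ⟨o, ho⟩ := hco
  have h := COCount.ncard_holes_le ho Set.univ
  rw [Set.ncard_univ, Nat.card_eq_fintype_card] at h
  refine le_trans ?_ h
  refine le_trans (Set.ncard_le_ncard ?_ (Set.toFinite _))
    (Set.ncard_image_le (f := fun S => (⊤ : G.Subgraph).induce S) (Set.toFinite _))
  rintro H ⟨v, c, hc, rfl⟩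
  exact ⟨_, ⟨⟨v, c, hc, rfl⟩, Set.subset_univ _⟩, (COCount.toSubgraph_eq_induce hc).symm⟩
end

section
/- Let G be a cyclically orientable finite simple graph. Then every block of G (every maximal subgraph of G without a cut vertex) with n_i ≥ 2 vertices has at most 2·n_i − 3 edges. -/
/-!
The bound `e ≤ 2n - 3` holds for the subgraph induced on any vertex set `A` with `n ≥ 2` elements
in a cyclically orientable graph, in particular on the vertex set of a block.

Fix a good orientation. If two neighbours `s, t` of `z` lie together with `z` on a chordless cycle,
one of the edges `zs`, `zt` enters `z` and the other leaves it. Hence `z` has no three neighbours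
that are pairwise related in this way. Two neighbours `s, t` of `z` are so related if they are
adjacent (`opp_of_adj`), or if both have a neighbour in a connected set `C` that avoids `z` and
its neighbours (`opp_of_walkConn`: close up a shortest path from `s` to `t` through `C`).

Among all pairs `(z, C)` with `z ∈ A` and `C ⊆ A` nonempty, connected, and avoiding `z` and its
neighbours, choose one with `C` largest. Let `S` be the set of vertices of `A \ C` with a neighbour
in `C`, and `D ∋ z` the rest of `A \ C`. By maximality every vertex of `D` is adjacent to every
vertex of `S`. If `S` has two distinct vertices `s, t`, then `z` has no further neighbour `x` in
`A`: such an `x` is in `S`, or in `D` and thus adjacent to `s` and `t`, and in both cases `s, t, x`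
are pairwise related. So `z` has degree at most 2 and can be deleted. If `S` has at most one
vertex, `A` is the union of `C ∪ S` and `S ∪ D`, with no edge between `C` and `D`. If no
pair `(z, C)` exists, `A` is a clique, with at most 3 vertices. This is
`exists_low_degree_or_split`, and the bound follows by induction on `A` (`card_adjPairs_le`).
-/


open SimpleGraph

variable {V : Type*}

/-! ### Chordless cycles through a vertex -/

open Classical in
/-- If a walk inside `K` joins `s` to `t`, so does an induced path inside `K`: take a shortest
such walk. -/
lemma exists_chordless_path {G : SimpleGraph V} {K : Set V} {s t : V}
    (h : ∃ p : G.Walk s t, ∀ x ∈ p.support, x ∈ K) :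
    ∃ p : G.Walk s t, p.IsPath ∧ (∀ x ∈ p.support, x ∈ K) ∧
      ∀ x ∈ p.support, ∀ y ∈ p.support, G.Adj x y → s(x, y) ∈ p.edges := by
  have h' : ∃ n, ∃ p : G.Walk s t, (∀ x ∈ p.support, x ∈ K) ∧ p.length = n := by
    obtain ⟨p, hp⟩ := h
    exact ⟨_, p, hp, rfl⟩
  obtain ⟨p₀, hp₀, hlen₀⟩ := Nat.find_spec h'
  have hmin : ∀ q : G.Walk s t, (∀ x ∈ q.support, x ∈ K) → p₀.bypass.length ≤ q.length := by
    intro q hq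
    have h1 := p₀.length_bypass_le_length
    have h2 := Nat.find_min' h' ⟨q, hq, rfl⟩
    omega
  have hK : ∀ x ∈ p₀.bypass.support, x ∈ K :=
    fun x hx => hp₀ x (p₀.support_bypass_subset_support hx)
  refine ⟨p₀.bypass, p₀.bypass_isPath, hK, ?_⟩
  generalize p₀.bypass = p at hmin hK
  -- a chord from the `i`-th to the `j`-th vertex would give a shortcut unless `j = i + 1`
  have key : ∀ i j, i ≤ j → j ≤ p.length → G.Adj (p.getVert i) (p.getVert j) →
      s(p.getVert i, p.getVert j) ∈ p.edges := by
    intro i j hij hj hadj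
    have hq := hmin ((p.take i).append (Walk.cons hadj (p.drop j))) (by
      intro x hx
      rw [Walk.mem_support_append_iff, Walk.support_cons, List.mem_cons] at hx
      rcases hx with hx | rfl | hx
      · exact hK _ ((p.isSubwalk_take i).support_subset hx)
      · exact hK _ (p.getVert_mem_support i)
      · exact hK _ ((p.isSubwalk_drop j).support_subset hx))
    rw [Walk.length_append, Walk.length_cons, Walk.take_length, Walk.drop_length] at hq
    have hne : i ≠ j := by
      rintro rfl
      exact hadj.ne rfl
    obtain rfl : j = i + 1 := by omega
    rw [Walk.edges, List.mem_map]
    refine ⟨p.darts[i]'(by rw [Walk.length_darts]; omega), List.getElem_mem _, ?_⟩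
    rw [Walk.darts_getElem_eq_getVert]
    rfl
  intro x hx y hy hadj
  obtain ⟨i, rfl, hi⟩ := Walk.mem_support_iff_exists_getVert.mp hx
  obtain ⟨j, rfl, hj⟩ := Walk.mem_support_iff_exists_getVert.mp hy
  rcases le_total i j with h | h
  · exact key i j h hj hadj
  · rw [Sym2.eq_swap]
    exact key j i h hi hadj.symm

/-- If an induced path from `s` to `t` avoids `z` and its ends are the only neighbours of `z` on it,
then adding `z` gives a chordless cycle, so exactly one of `zs`, `zt` leaves `z`. -/
lemma opp_of_path {G : SimpleGraph V} {o : G.Orientation}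
    (ho : ∀ (v : V) (c : G.Walk v v), c.IsChordlessCycle → o.IsCyclicOn c)
    {z s t : V} (hs : G.Adj z s) (ht : G.Adj z t) (hst : s ≠ t)
    (p : G.Walk s t) (hp : p.IsPath)
    (hch : ∀ x ∈ p.support, ∀ y ∈ p.support, G.Adj x y → s(x, y) ∈ p.edges)
    (hz : z ∉ p.support) (hN : ∀ x ∈ p.support, G.Adj z x → x = s ∨ x = t) :
    o.dir z s ↔ ¬ o.dir z t := by
  have hcyc : (Walk.cons hs (p.concat ht.symm)).IsChordlessCycle := by
    refine ⟨(Walk.cons_isCycle_iff _ _).2 ⟨hp.concat hz ht.symm, ?_⟩, ?_⟩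
    · rw [Walk.edges_concat, List.concat_eq_append, List.mem_append, not_or]
      refine ⟨fun h => hz (p.fst_mem_support_of_mem_edges h), ?_⟩
      simp [hst, hs.ne']
    · have hzx : ∀ x ∈ p.support, G.Adj z x →
          s(z, x) ∈ (Walk.cons hs (p.concat ht.symm)).edges := by
        intro x hx hadj
        rcases hN x hx hadj with rfl | rfl
        · simp
        · simp [Walk.edges_concat, Sym2.eq_swap]
      intro u w hu hw hadj
      simp only [Walk.support_cons, Walk.support_concat, List.mem_cons,
        List.mem_append, List.not_mem_nil, or_false] at hu hw
      have hu' : u = z ∨ u ∈ p.support := by tauto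
      have hw' : w = z ∨ w ∈ p.support := by tauto
      rcases hu' with rfl | hu' <;> rcases hw' with rfl | hw'
      · exact absurd rfl hadj.ne
      · exact hzx w hw' hadj
      · rw [Sym2.eq_swap]
        exact hzx u hu' hadj.symm
      · simp [Walk.edges_concat, hch u hu' w hw' hadj]
  have h1 : (⟨(z, s), hs⟩ : G.Dart) ∈ (Walk.cons hs (p.concat ht.symm)).darts := by simp
  have h2 : (⟨(t, z), ht.symm⟩ : G.Dart) ∈ (Walk.cons hs (p.concat ht.symm)).darts := by
    simp [Walk.darts_concat]
  have e1 := o.adj_iff_dir z s hs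
  have e2 := o.adj_iff_dir z t ht
  rcases ho z _ hcyc with h | h
  · have a := h _ h1
    have b := h _ h2
    simp only at a b
    tauto
  · have a := h _ h1
    have b := h _ h2
    simp only at a b
    tauto

/-- The set `C` is connected in `G`, or empty: any two of its vertices are joined by a walk of `G`
that stays inside `C`. -/
def WalkConn (G : SimpleGraph V) (C : Set V) : Prop :=
  ∀ a ∈ C, ∀ b ∈ C, ∃ p : G.Walk a b, ∀ x ∈ p.support, x ∈ C

lemma WalkConn.insert {G : SimpleGraph V} {C : Set V} (hC : WalkConn G C) {s c : V}
    (hc : c ∈ C) (hsc : G.Adj s c) : WalkConn G (insert s C) := by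
  have key : ∀ b ∈ C, ∃ p : G.Walk s b, ∀ x ∈ p.support, x ∈ Insert.insert s C := by
    intro b hb
    obtain ⟨p, hp⟩ := hC c hc b hb
    refine ⟨Walk.cons hsc p, fun x hx => ?_⟩
    rw [Walk.support_cons, List.mem_cons] at hx
    exact hx.imp id (hp x)
  rintro a (rfl | ha) b (rfl | hb)
  · exact ⟨Walk.nil, by simp⟩
  · exact key b hb
  · obtain ⟨p, hp⟩ := key a ha
    exact ⟨p.reverse, by simpa using hp⟩
  · obtain ⟨p, hp⟩ := hC a ha b hb
    exact ⟨p, fun x hx => Or.inr (hp x hx)⟩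

lemma opp_of_adj {G : SimpleGraph V} {o : G.Orientation}
    (ho : ∀ (v : V) (c : G.Walk v v), c.IsChordlessCycle → o.IsCyclicOn c)
    {z s t : V} (hs : G.Adj z s) (ht : G.Adj z t) (hst : G.Adj s t) :
    o.dir z s ↔ ¬ o.dir z t := by
  refine opp_of_path ho hs ht hst.ne (Walk.cons hst Walk.nil) (by simp [hst.ne]) ?_
    (by simp [hs.ne, ht.ne]) (by simp)
  intro x hx y hy hadj
  have := hadj.ne
  simp at hx hy ⊢
  grind

lemma opp_of_walkConn {G : SimpleGraph V} {o : G.Orientation}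
    (ho : ∀ (v : V) (c : G.Walk v v), c.IsChordlessCycle → o.IsCyclicOn c)
    {z s t : V} (hs : G.Adj z s) (ht : G.Adj z t) (hst : s ≠ t)
    {C : Set V} (hC : WalkConn G C) (hzC : ∀ c ∈ C, c ≠ z ∧ ¬ G.Adj z c)
    {c d : V} (hc : c ∈ C) (hsc : G.Adj s c) (hd : d ∈ C) (htd : G.Adj t d) :
    o.dir z s ↔ ¬ o.dir z t := by
  have hK := (hC.insert hd htd).insert (Or.inr hc) hsc
  obtain ⟨p, hp, hpK, hch⟩ := exists_chordless_path (hK s (by simp) t (by simp))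
  refine opp_of_path ho hs ht hst p hp hch ?_ ?_
  · intro hz
    rcases hpK z hz with h | h | h
    · exact hs.ne h
    · exact ht.ne h
    · exact (hzC z h).1 rfl
  · intro x hx hadj
    rcases hpK x hx with h | h | h
    · exact Or.inl h
    · exact Or.inr h
    · exact absurd hadj (hzC x h).2

lemma not_three_opp {P Q R : Prop} (h1 : P ↔ ¬ Q) (h2 : P ↔ ¬ R) (h3 : Q ↔ ¬ R) : False := by
  tauto

/-! ### Low-degree vertices and small separations -/

open Classical in
/-- In a cyclically orientable graph, a nonempty vertex set `A` contains a vertex with at most two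
neighbours in `A`, or it is the union of two proper subsets that share at most one vertex and together
contain all edges on `A`. -/
lemma exists_low_degree_or_split {G : SimpleGraph V} {o : G.Orientation}
    (ho : ∀ (v : V) (c : G.Walk v v), c.IsChordlessCycle → o.IsCyclicOn c)
    (A : Finset V) (hA : A.Nonempty) :
    (∃ v ∈ A, (A.filter (G.Adj v)).card ≤ 2) ∨
    ∃ X Y : Finset V, X ∪ Y = A ∧ X ≠ A ∧ Y ≠ A ∧ (X ∩ Y).card ≤ 1 ∧
      ∀ a ∈ A, ∀ b ∈ A, G.Adj a b → (a ∈ X ∧ b ∈ X) ∨ (a ∈ Y ∧ b ∈ Y) := by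
  -- pairs `(z, C)` with `C` nonempty, connected, and avoiding `z` and its neighbours
  let F : Finset (V × Finset V) := (A ×ˢ A.powerset).filter fun q =>
    q.2.Nonempty ∧ WalkConn G (q.2 : Set V) ∧ ∀ c ∈ q.2, c ≠ q.1 ∧ ¬ G.Adj q.1 c
  have hF : ∀ z C, (z, C) ∈ F ↔ (z ∈ A ∧ C ⊆ A) ∧ C.Nonempty ∧ WalkConn G (C : Set V) ∧
      ∀ c ∈ C, c ≠ z ∧ ¬ G.Adj z c := by
    intro z C
    simp [F]
  by_cases hne : F.Nonempty
  · obtain ⟨⟨z, C⟩, hzC, hmax⟩ := F.exists_max_image (fun q => q.2.card) hne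
    obtain ⟨⟨hzA, hCA⟩, hCne, hCconn, hCz⟩ := (hF z C).1 hzC
    -- otherwise `(w, insert s C)` would be a pair with a larger second component
    have hext : ∀ w ∈ A, (∀ c ∈ C, c ≠ w ∧ ¬ G.Adj w c) → ∀ s ∈ A, s ∉ C → s ≠ w →
        (∃ c ∈ C, G.Adj s c) → G.Adj w s := by
      rintro w hw hwC s hs hsC hsw ⟨c, hc, hsc⟩
      by_contra hws
      have hmem : (w, insert s C) ∈ F := by
        rw [hF]
        refine ⟨⟨hw, Finset.insert_subset hs hCA⟩, Finset.insert_nonempty _ _, ?_, ?_⟩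
        · rw [Finset.coe_insert]
          exact hCconn.insert (Finset.mem_coe.2 hc) hsc
        · intro x hx
          rcases Finset.mem_insert.1 hx with rfl | hx
          · exact ⟨hsw, hws⟩
          · exact hwC x hx
      have := hmax _ hmem
      simp only [Finset.card_insert_of_notMem hsC] at this
      omega
    let S := A.filter fun s => s ∉ C ∧ ∃ c ∈ C, G.Adj s c
    let D := A.filter fun w => w ∉ C ∧ ¬ ∃ c ∈ C, G.Adj w c
    have hS : ∀ s, s ∈ S ↔ s ∈ A ∧ s ∉ C ∧ ∃ c ∈ C, G.Adj s c := by simp [S]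
    have hD : ∀ s, s ∈ D ↔ s ∈ A ∧ s ∉ C ∧ ¬ ∃ c ∈ C, G.Adj s c := by simp [D]
    have hzD : z ∈ D := (hD z).2 ⟨hzA, fun h => (hCz z h).1 rfl,
      fun ⟨c, hc, h⟩ => (hCz c hc).2 h⟩
    have hDC : ∀ w ∈ D, ∀ c ∈ C, c ≠ w ∧ ¬ G.Adj w c := by
      intro w hw c hc
      obtain ⟨-, h1, h2⟩ := (hD w).1 hw
      exact ⟨fun h => h1 (h ▸ hc), fun h => h2 ⟨c, hc, h⟩⟩
    have hSD : ∀ w ∈ D, ∀ s ∈ S, G.Adj w s := by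
      intro w hw s hs
      obtain ⟨h1, h2, h3⟩ := (hS s).1 hs
      have hw' := (hD w).1 hw
      exact hext w hw'.1 (hDC w hw) s h1 h2 (fun h => hw'.2.2 (h ▸ h3)) h3
    have hSopp : ∀ s ∈ S, ∀ t ∈ S, s ≠ t → (o.dir z s ↔ ¬ o.dir z t) := by
      intro s hs t ht hst
      obtain ⟨-, -, c, hc, hsc⟩ := (hS s).1 hs
      obtain ⟨-, -, d, hd, htd⟩ := (hS t).1 ht
      exact opp_of_walkConn ho (hSD z hzD s hs) (hSD z hzD t ht) hst hCconn hCz hc hsc hd htd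
    by_cases hS1 : S.card ≤ 1
    · right
      have hcov : ∀ x ∈ A, x ∈ C ∨ x ∈ S ∨ x ∈ D := by
        intro x hx
        rw [hS, hD]
        by_cases h1 : x ∈ C
        · exact Or.inl h1
        · by_cases h2 : ∃ c ∈ C, G.Adj x c
          · exact Or.inr (Or.inl ⟨hx, h1, h2⟩)
          · exact Or.inr (Or.inr ⟨hx, h1, h2⟩)
      have hSA : S ⊆ A := Finset.filter_subset _ _
      have hDA : D ⊆ A := Finset.filter_subset _ _
      have hCS : ∀ x ∈ C, x ∉ S := fun x hx h => ((hS x).1 h).2.1 hx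
      have hCD : ∀ x ∈ C, x ∉ D := fun x hx h => ((hD x).1 h).2.1 hx
      have hSD' : ∀ x ∈ S, x ∉ D := fun x hx h => ((hD x).1 h).2.2 ((hS x).1 hx).2.2
      refine ⟨C ∪ S, S ∪ D, ?_, ?_, ?_, ?_, ?_⟩
      · refine Finset.Subset.antisymm
          (Finset.union_subset (Finset.union_subset hCA hSA) (Finset.union_subset hSA hDA)) ?_
        intro x hx
        have := hcov x hx
        simp only [Finset.mem_union]
        rcases this with h | h | h <;> simp [h]
      · intro h
        rcases Finset.mem_union.1 (h.symm ▸ hzA : z ∈ C ∪ S) with h | h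
        · exact hCD z h hzD
        · exact hSD' z h hzD
      · intro h
        obtain ⟨c, hc⟩ := hCne
        rcases Finset.mem_union.1 (h.symm ▸ hCA hc : c ∈ S ∪ D) with h | h
        · exact hCS c hc h
        · exact hCD c hc h
      · refine le_trans (Finset.card_le_card ?_) hS1
        intro x hx
        obtain ⟨h1, h2⟩ := Finset.mem_inter.1 hx
        rcases Finset.mem_union.1 h2 with h | h
        · exact h
        · exact (Finset.mem_union.1 h1).resolve_left fun hc => hCD x hc h
      · intro a ha b hb hab
        simp only [Finset.mem_union]
        have h1 : a ∈ C → b ∉ D := fun h h' => (hDC b h' a h).2 hab.symm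
        have h2 : b ∈ C → a ∉ D := fun h h' => (hDC a h' b h).2 hab
        rcases hcov a ha with h | h | h <;> rcases hcov b hb with h' | h' | h'
        · exact Or.inl ⟨Or.inl h, Or.inl h'⟩
        · exact Or.inl ⟨Or.inl h, Or.inr h'⟩
        · exact absurd h' (h1 h)
        · exact Or.inl ⟨Or.inr h, Or.inl h'⟩
        · exact Or.inl ⟨Or.inr h, Or.inr h'⟩
        · exact Or.inr ⟨Or.inl h, Or.inr h'⟩
        · exact absurd h (h2 h')
        · exact Or.inr ⟨Or.inr h, Or.inl h'⟩
        · exact Or.inr ⟨Or.inr h, Or.inr h'⟩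
    · left
      refine ⟨z, hzA, ?_⟩
      obtain ⟨s, hs, t, ht, hst⟩ := Finset.one_lt_card.1 (not_le.1 hS1)
      refine le_trans (Finset.card_le_card (t := {s, t}) ?_) Finset.card_le_two
      intro x hx
      obtain ⟨hxA, hzx⟩ := Finset.mem_filter.1 hx
      by_contra hxst
      simp only [Finset.mem_insert, Finset.mem_singleton, not_or] at hxst
      have hxopp : ∀ y ∈ S, x ≠ y → (o.dir z x ↔ ¬ o.dir z y) := by
        intro y hy hxy
        by_cases hxS : x ∈ S
        · exact hSopp x hxS y hy hxy
        · have hxD : x ∈ D := by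
            have h1 : x ∉ C := fun h => (hCz x h).2 hzx
            exact (hD x).2 ⟨hxA, h1, fun h2 => hxS ((hS x).2 ⟨hxA, h1, h2⟩)⟩
          exact opp_of_adj ho hzx (hSD z hzD y hy) (hSD x hxD y hy)
      exact not_three_opp (hxopp s hs hxst.1) (hxopp t ht hxst.2) (hSopp s hs t ht hst)
  -- without any such pair `A` is a clique, since `C` may be a single non-neighbour of `z`
  · left
    have hcl : ∀ a ∈ A, ∀ b ∈ A, a ≠ b → G.Adj a b := by
      intro a ha b hb hab
      by_contra hnadj
      refine hne ⟨(a, {b}), (hF a {b}).2 ⟨⟨ha, by simpa using hb⟩, by simp, ?_, ?_⟩⟩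
      · intro x hx y hy
        obtain rfl : x = b := by simpa using hx
        obtain rfl : y = x := by simpa using hy
        exact ⟨Walk.nil, by simp⟩
      · intro c hc
        obtain rfl : c = b := by simpa using hc
        exact ⟨hab.symm, hnadj⟩
    obtain ⟨z, hz⟩ := hA
    refine ⟨z, hz, ?_⟩
    by_contra! h
    obtain ⟨a, b, c, ha, hb, hc, hab, hac, hbc⟩ := Finset.two_lt_card_iff.1 h
    rw [Finset.mem_filter] at ha hb hc
    exact not_three_opp (opp_of_adj ho ha.2 hb.2 (hcl a ha.1 b hb.1 hab))
      (opp_of_adj ho ha.2 hc.2 (hcl a ha.1 c hc.1 hac))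
      (opp_of_adj ho hb.2 hc.2 (hcl b hb.1 c hc.1 hbc))

/-! ### Counting edges -/

/-- The ordered pairs of adjacent vertices of `A`; their number is twice the number of edges of the
subgraph of `G` induced on `A`. -/
noncomputable def adjPairs (G : SimpleGraph V) (A : Finset V) : Finset (V × V) :=
  open Classical in (A ×ˢ A).filter (fun p => G.Adj p.1 p.2)

lemma mem_adjPairs {G : SimpleGraph V} {A : Finset V} {p : V × V} :
    p ∈ adjPairs G A ↔ (p.1 ∈ A ∧ p.2 ∈ A) ∧ G.Adj p.1 p.2 := by
  simp [adjPairs]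

lemma card_adjPairs_of_card_eq_one {G : SimpleGraph V} {A : Finset V} (hA : A.card = 1) :
    (adjPairs G A).card = 0 := by
  obtain ⟨a, rfl⟩ := Finset.card_eq_one.1 hA
  rw [Finset.card_eq_zero, Finset.eq_empty_iff_forall_notMem]
  rintro ⟨x, y⟩ h
  obtain ⟨⟨h1, h2⟩, h3⟩ := mem_adjPairs.1 h
  simp only [Finset.mem_singleton] at h1 h2
  exact h3.ne (h1.trans h2.symm)

open Classical in
lemma card_adjPairs_le_erase (G : SimpleGraph V) (A : Finset V) (v : V) :
    (adjPairs G A).card ≤ (adjPairs G (A.erase v)).card + 2 * (A.filter (G.Adj v)).card := by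
  set N := A.filter (G.Adj v)
  have hsub : adjPairs G A ⊆ adjPairs G (A.erase v) ∪ (N.image (fun x => (v, x)) ∪
      N.image (fun x => (x, v))) := by
    rintro ⟨x, y⟩ h
    obtain ⟨⟨h1, h2⟩, h3⟩ := mem_adjPairs.1 h
    simp only at h1 h2 h3
    have h3' := h3.symm
    simp only [Finset.mem_union, mem_adjPairs, Finset.mem_erase, Finset.mem_image, N,
      Finset.mem_filter, Prod.mk.injEq]
    grind
  have h1 := Finset.card_le_card hsub
  have h2 := Finset.card_union_le (adjPairs G (A.erase v)) (N.image (fun x => (v, x)) ∪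
      N.image (fun x => (x, v)))
  have h3 := Finset.card_union_le (N.image (fun x => (v, x))) (N.image (fun x => (x, v)))
  have h4 : (N.image (fun x => (v, x))).card ≤ N.card := Finset.card_image_le
  have h5 : (N.image (fun x => (x, v))).card ≤ N.card := Finset.card_image_le
  omega

open Classical in
/-- The edge bound `e ≤ 2n - 3` for induced subgraphs of cyclically orientable graphs, doubled and
stated without subtraction. -/
lemma card_adjPairs_le {G : SimpleGraph V} {o : G.Orientation}
    (ho : ∀ (v : V) (c : G.Walk v v), c.IsChordlessCycle → o.IsCyclicOn c)
    (A : Finset V) (hA : 2 ≤ A.card) : (adjPairs G A).card + 6 ≤ 4 * A.card := by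
  induction A using Finset.strongInduction with
  | H A ih =>
  -- the weaker bound `e ≤ 2n - 2` also covers a single vertex
  have ih' : ∀ B ⊂ A, B.Nonempty → (adjPairs G B).card + 4 ≤ 4 * B.card := by
    intro B hB hne
    rcases Nat.lt_or_ge B.card 2 with h | h
    · have h1 : B.card = 1 := by
        have := hne.card_pos
        omega
      rw [card_adjPairs_of_card_eq_one h1, h1]
    · have := ih B hB h
      omega
  rcases exists_low_degree_or_split ho A (Finset.card_pos.1 (by omega)) with
    ⟨v, hv, hdeg⟩ | ⟨X, Y, hXY, hX, hY, hcard, hadj⟩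
  · have h1 := card_adjPairs_le_erase G A v
    have h2 := Finset.card_erase_of_mem hv
    rcases hA.eq_or_lt with h | h
    · have h3 : (A.filter (G.Adj v)).card ≤ 1 := by
        rw [← h] at h2
        refine le_trans (Finset.card_le_card ?_) h2.le
        intro x hx
        rw [Finset.mem_filter] at hx
        exact Finset.mem_erase.2 ⟨hx.2.ne', hx.1⟩
      have h4 := card_adjPairs_of_card_eq_one (G := G) (A := A.erase v) (by omega)
      omega
    · have h3 := ih _ (Finset.erase_ssubset hv) (by omega)
      omega
  · have hXA : X ⊂ A := ⟨hXY ▸ Finset.subset_union_left,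
      fun h => hX ((hXY ▸ Finset.subset_union_left : X ⊆ A).antisymm h)⟩
    have hYA : Y ⊂ A := ⟨hXY ▸ Finset.subset_union_right,
      fun h => hY ((hXY ▸ Finset.subset_union_right : Y ⊆ A).antisymm h)⟩
    have hsub : adjPairs G A ⊆ adjPairs G X ∪ adjPairs G Y := by
      rintro ⟨x, y⟩ h
      obtain ⟨⟨h1, h2⟩, h3⟩ := mem_adjPairs.1 h
      simp only [Finset.mem_union, mem_adjPairs]
      have := hadj x h1 y h2 h3
      tauto
    have h1 := Finset.card_le_card hsub
    have h2 := Finset.card_union_le (adjPairs G X) (adjPairs G Y)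
    have h3 := Finset.card_union_add_card_inter X Y
    rw [hXY] at h3
    have hXc := Finset.card_lt_card hXA
    have hYc := Finset.card_lt_card hYA
    rcases Nat.le_one_iff_eq_zero_or_eq_one.1 hcard with h | h
    · have h4 := ih' X hXA (Finset.card_pos.1 (by omega))
      have h5 := ih' Y hYA (Finset.card_pos.1 (by omega))
      omega
    · have h4 := ih X hXA (by omega)
      have h5 := ih Y hYA (by omega)
      omega

open Classical in
lemma two_mul_ncard_edgeSet_le [Fintype V] {G : SimpleGraph V} (B : G.Subgraph) :
    2 * B.edgeSet.ncard ≤ (adjPairs G B.verts.toFinset).card := by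
  have h : B.spanningCoe.edgeFinset.card = B.edgeSet.ncard := by
    rw [← Set.ncard_coe_finset, coe_edgeFinset, Subgraph.edgeSet_spanningCoe]
  rw [← h, ← dart_card_eq_twice_card_edges, ← Finset.card_univ]
  refine Finset.card_le_card_of_injOn (fun d => d.toProd) ?_ ?_
  · intro d _
    have hd : B.Adj d.fst d.snd := d.adj
    exact Finset.mem_coe.2 (mem_adjPairs.2
      ⟨⟨by simpa using hd.fst_mem, by simpa using hd.snd_mem⟩, hd.adj_sub⟩)
  · intro d _ e _ h
    exact Dart.ext _ _ h

/-- In a cyclically orientable finite simple graph, every block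
with `n_i ≥ 2` vertices has at most `2 * n_i - 3` edges. -/
theorem co_block_edge_bound {V : Type*} [Fintype V] (G : SimpleGraph V)
    (hco : G.CyclicallyOrientable) (B : G.Subgraph) (hB : B.IsBlock)
    (hn : 2 ≤ B.verts.ncard) :
    B.edgeSet.ncard ≤ 2 * B.verts.ncard - 3 := by
  classical
  obtain ⟨o, ho⟩ := hco
  have hcard : B.verts.toFinset.card = B.verts.ncard := (Set.ncard_eq_toFinset_card' _).symm
  have h1 := two_mul_ncard_edgeSet_le B
  have h2 := card_adjPairs_le ho B.verts.toFinset (hcard ▸ hn)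
  omega
end
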